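/- arXiv:2110.11032 — 4 statements merged into one kernel-verified Lean document; each statement's English description precedes it below -/
import Mathlib

section
/- Let n ≥ 1 and let h : ℝ → ℝ be a smooth 2π-periodic function. Define U_n(θ₁, …, θ_n) = −(1/n) ∑_{1≤μ≠ν≤n} (1/2) cot((θ_μ − θ_ν)/2) (h(θ_μ) − h(θ_ν)), where for θ_μ = θ_ν the summand is interpreted as its continuous extension −h'(θ_μ). Then 𝔼_n[U_n] = 0. -/
open MeasureTheory

/-- The expectation with respect to the eigenvalue distribution of a Haar-random
`n × n` unitary matrix (CUE). -/
noncomputable def cueExpect (n : ℕ) (F : (Fin n → ℝ) → ℝ) : ℝ :=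
  (1 / ((2 * Real.pi) ^ n * n.factorial)) *
    ∫ θ in Set.pi Set.univ (fun _ : Fin n => Set.Icc (-Real.pi) Real.pi),
      (∏ p ∈ Finset.univ.filter (fun p : Fin n × Fin n => p.1 < p.2),
        ‖Complex.exp (Complex.I * (θ p.1 : ℂ))
          - Complex.exp (Complex.I * (θ p.2 : ℂ))‖ ^ 2) * F θ

/-!
With `V θ = ∏_{μ<ν} |e^{iθ_μ} - e^{iθ_ν}|²`, logarithmic differentiation turns `V · U_n` into
`-(1/n) ∑ μ, h(θ_μ) ∂_μ V`. Since `V` is invariant under rotating all angles simultaneously,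
`∂_μ V = -∑_{ν≠μ} ∂_ν V`, so only the terms `h(θ_μ) ∂_ν V` with `ν ≠ μ` remain. Each of them
integrates to zero over `θ_ν` alone, because `V` is `2π`-periodic in `θ_ν`.
-/

open Function Set

lemma sum_fst_ne_snd_eq_two_nsmul_sum_lt {α M : Type*} [Fintype α] [LinearOrder α] [AddCommMonoid M]
    {f : α × α → M} (hf : ∀ p, f p.swap = f p) :
    ∑ p with p.1 ≠ p.2, f p = 2 • ∑ p with p.1 < p.2, f p := by
  have hgt : ∑ p with p.2 < p.1, f p = ∑ p with p.1 < p.2, f p :=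
    Finset.sum_equiv (Equiv.prodComm α α) (by simp) fun p _ => (hf p).symm
  simp only [ne_iff_lt_or_gt, Finset.filter_or]
  rw [Finset.sum_union, hgt, two_nsmul]
  exact Finset.disjoint_filter.mpr fun p _ hlt hgt => hlt.asymm hgt

lemma map_eq_neg_sum_compl_of_map_one_eq_zero {ι R M : Type*} [Fintype ι] [DecidableEq ι] [Ring R]
    [AddCommGroup M] [Module R M] (L : (ι → R) →ₗ[R] M) (hL : L 1 = 0) (v : ι → R) :
    L v = -∑ i, ∑ j ∈ {i}ᶜ, v i • L (Pi.single j 1) := by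
  have hexpand (w : ι → R) : L w = ∑ i, w i • L (Pi.single i 1) := by
    conv_lhs => rw [pi_eq_sum_univ' w]
    simp only [map_sum, map_smul]
  have hpartial (i : ι) : L (Pi.single i 1) = -∑ j ∈ {i}ᶜ, L (Pi.single j 1) := by
    rw [eq_neg_iff_add_eq_zero, ← Fintype.sum_eq_add_sum_compl i fun j => L (Pi.single j 1),
      ← hL, hexpand 1]
    simp only [Pi.one_apply, one_smul]
  rw [hexpand v, ← Finset.sum_neg_distrib]
  exact Finset.sum_congr rfl fun i _ => by rw [hpartial, smul_neg, Finset.smul_sum]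

section BoxIntegrals

lemma integral_pi_eq_integral_integral_insertNth {n : ℕ} {α : Fin (n + 1) → Type*}
    [∀ j, MeasurableSpace (α j)] {E : Type*} [NormedAddCommGroup E] [NormedSpace ℝ E]
    (μ : ∀ j, Measure (α j)) [∀ j, SigmaFinite (μ j)] (i : Fin (n + 1))
    {F : (∀ j, α j) → E} (hF : Integrable F (Measure.pi μ)) :
    ∫ x, F x ∂Measure.pi μ =
      ∫ y, ∫ t, F (i.insertNth t y) ∂μ i ∂Measure.pi fun j => μ (i.succAbove j) := by
  have hmp := (measurePreserving_piFinSuccAbove μ i).symm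
  rw [← hmp.integral_comp']
  exact integral_prod_symm _ (hmp.integrable_comp_of_integrable hF)

lemma integrableOn_fderiv_apply_mul {E : Type*} [NormedAddCommGroup E] [NormedSpace ℝ E]
    [MeasurableSpace E] [OpensMeasurableSpace E] {μ : Measure E} {K : Set E} (hK : IsCompact K)
    {f g : E → ℝ} (hf : ContDiff ℝ 1 f) (v : E) (hg : IntegrableOn g K μ) :
    IntegrableOn (fun x => fderiv ℝ f x v * g x) K μ :=
  hg.continuousOn_mul
    ((hf.continuous_fderiv one_ne_zero).clm_apply continuous_const).continuousOn hK

section Fintype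

variable {ι : Type*} [Fintype ι]

lemma volume_restrict_Icc_pi (a b : ι → ℝ) :
    volume.restrict (Icc a b) = Measure.pi fun i => volume.restrict (Icc (a i) (b i)) := by
  rw [← pi_univ_Icc, volume_pi, Measure.restrict_pi_pi]

lemma setIntegral_fderiv_single_update_eq_zero [DecidableEq ι] {f : (ι → ℝ) → ℝ}
    (hf : ContDiff ℝ 1 f) (θ : ι → ℝ) (i : ι) {s t : ℝ} (hst : s ≤ t)
    (hface : f (update θ i t) = f (update θ i s)) :
    ∫ r in Icc s t, fderiv ℝ f (update θ i r) (Pi.single i 1) = 0 := by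
  have hcont : Continuous fun r => fderiv ℝ f (update θ i r) (Pi.single i 1) :=
    ((hf.continuous_fderiv one_ne_zero).comp (continuous_const.update i continuous_id)).clm_apply
      continuous_const
  have hderiv (r : ℝ) : HasDerivAt (fun r => f (update θ i r))
      (fderiv ℝ f (update θ i r) (Pi.single i 1)) r :=
    (hf.differentiable one_ne_zero _).hasFDerivAt.comp_hasDerivAt r (hasDerivAt_update θ i r)
  rw [integral_Icc_eq_integral_Ioc, ← intervalIntegral.integral_of_le hst,
    intervalIntegral.integral_eq_sub_of_hasDerivAt
      (fun r _ => hderiv r) (hcont.intervalIntegrable s t), hface, sub_self]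

lemma integrableOn_Icc_comp_eval {E : Type*} [NormedAddCommGroup E] {a b : ι → ℝ}
    (i : ι) {u : ℝ → E} (hu : IntegrableOn u (Icc (a i) (b i))) :
    IntegrableOn (fun θ : ι → ℝ => u (θ i)) (Icc a b) := by
  rw [IntegrableOn, volume_restrict_Icc_pi]
  exact integrable_comp_eval hu

end Fintype

variable {n : ℕ} {a b : Fin n → ℝ} {f g : (Fin n → ℝ) → ℝ} {i : Fin n}

lemma setIntegral_Icc_eq_zero_of_forall_update {E : Type*} [NormedAddCommGroup E]
    [NormedSpace ℝ E] {F : (Fin n → ℝ) → E} (hF : IntegrableOn F (Icc a b))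
    (hslice : ∀ θ, ∫ t in Icc (a i) (b i), F (update θ i t) = 0) :
    ∫ θ in Icc a b, F θ = 0 := by
  cases n with
  | zero => exact i.elim0
  | succ m =>
    have hinner (y : Fin m → ℝ) : ∫ t in Icc (a i) (b i), F (i.insertNth t y) = 0 := by
      simpa only [Fin.update_insertNth] using hslice (i.insertNth 0 y)
    rw [IntegrableOn, volume_restrict_Icc_pi] at hF
    rw [volume_restrict_Icc_pi, integral_pi_eq_integral_integral_insertNth _ i hF]
    simp only [hinner, integral_zero]

lemma setIntegral_fderiv_single_mul_eq_zero (hab : a i ≤ b i) (hf : ContDiff ℝ 1 f)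
    (hface : ∀ θ, f (update θ i (b i)) = f (update θ i (a i)))
    (hg : IntegrableOn g (Icc a b)) (hgi : DependsOn g {i}ᶜ) :
    ∫ θ in Icc a b, fderiv ℝ f θ (Pi.single i 1) * g θ = 0 := by
  refine setIntegral_Icc_eq_zero_of_forall_update
    (integrableOn_fderiv_apply_mul isCompact_Icc hf _ hg) (i := i) fun θ => ?_
  have hgθ (t : ℝ) : g (update θ i t) = g θ := hgi fun j hj => update_of_ne hj t θ
  simp only [hgθ]
  rw [integral_mul_const, setIntegral_fderiv_single_update_eq_zero hf θ i hab (hface θ), zero_mul]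

lemma setIntegral_fderiv_apply_eq_zero {u : Fin n → ℝ → ℝ} (hab : a ≤ b) (hf : ContDiff ℝ 1 f)
    (hface : ∀ θ i, f (update θ i (b i)) = f (update θ i (a i)))
    (hdiag : ∀ θ, fderiv ℝ f θ 1 = 0) (hu : ∀ i, IntegrableOn (u i) (Icc (a i) (b i))) :
    ∫ θ in Icc a b, fderiv ℝ f θ (fun i => u i (θ i)) = 0 := by
  have hoff (θ : Fin n → ℝ) : fderiv ℝ f θ (fun i => u i (θ i)) =
      -∑ i, ∑ j ∈ {i}ᶜ, fderiv ℝ f θ (Pi.single j 1) * u i (θ i) := by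
    simpa only [smul_eq_mul, mul_comm, ContinuousLinearMap.coe_coe] using
      map_eq_neg_sum_compl_of_map_one_eq_zero (fderiv ℝ f θ).toLinearMap (hdiag θ)
        fun i => u i (θ i)
  have hui (i : Fin n) : IntegrableOn (fun θ : Fin n → ℝ => u i (θ i)) (Icc a b) :=
    integrableOn_Icc_comp_eval i (hu i)
  have hint (i j : Fin n) :=
    integrableOn_fderiv_apply_mul isCompact_Icc hf (Pi.single j 1) (hui i)
  simp only [hoff]
  rw [integral_neg, neg_eq_zero,
    integral_finsetSum _ fun i _ => integrable_finsetSum _ fun j _ => hint i j]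
  refine Finset.sum_eq_zero fun i _ => ?_
  rw [integral_finsetSum _ fun j _ => hint i j]
  refine Finset.sum_eq_zero fun j hj => ?_
  have hij : i ≠ j := by simpa [eq_comm] using hj
  exact setIntegral_fderiv_single_mul_eq_zero (hab j) hf (fun θ => hface θ j) (hui i)
    fun x y hxy => by rw [hxy i hij]

end BoxIntegrals

section Vandermonde

variable {ι : Type*} [Fintype ι] [LinearOrder ι]

/-- The squared modulus of the Vandermonde determinant of the points `e^{iθ_μ}`, i.e. the
unnormalised CUE density. -/
noncomputable def vandermondeSq (θ : ι → ℝ) : ℝ :=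
  ∏ p : ι × ι with p.1 < p.2, (2 * Real.sin ((θ p.1 - θ p.2) / 2)) ^ 2

lemma norm_exp_I_mul_sub_exp_I_mul_sq (x y : ℝ) :
    ‖Complex.exp (Complex.I * x) - Complex.exp (Complex.I * y)‖ ^ 2 =
      (2 * Real.sin ((x - y) / 2)) ^ 2 := by
  have hfactor : Complex.exp (Complex.I * x) - Complex.exp (Complex.I * y) =
      Complex.exp (Complex.I * y) * (Complex.exp (Complex.I * (x - y : ℝ)) - 1) := by
    rw [mul_sub, mul_one, ← Complex.exp_add]
    push_cast
    ring_nf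
  rw [hfactor, norm_mul, Complex.norm_exp_I_mul_ofReal, one_mul,
    Complex.norm_exp_I_mul_ofReal_sub_one, Real.norm_eq_abs, sq_abs]

lemma cueExpect_eq_integral_vandermondeSq (n : ℕ) (F : (Fin n → ℝ) → ℝ) :
    cueExpect n F = 1 / ((2 * Real.pi) ^ n * n.factorial) *
      ∫ θ in Icc (fun _ => -Real.pi) fun _ => Real.pi, vandermondeSq θ * F θ := by
  simp only [cueExpect, norm_exp_I_mul_sub_exp_I_mul_sq, pi_univ_Icc, vandermondeSq]

lemma vandermondeSq_eq_zero_of_eq {θ : ι → ℝ} {i j : ι} (hij : i ≠ j) (hθ : θ i = θ j) :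
    vandermondeSq θ = 0 := by
  wlog hlt : i < j generalizing i j
  · exact this hij.symm hθ.symm (hij.lt_or_gt.resolve_left hlt)
  · exact Finset.prod_eq_zero (Finset.mem_filter.mpr ⟨Finset.mem_univ (i, j), hlt⟩) (by simp [hθ])

lemma contDiff_vandermondeSq {k : WithTop ℕ∞} :
    ContDiff ℝ k (vandermondeSq : (ι → ℝ) → ℝ) := by
  unfold vandermondeSq
  fun_prop

lemma periodic_two_mul_sin_half_sq :
    Periodic (fun x : ℝ => (2 * Real.sin (x / 2)) ^ 2) (2 * Real.pi) := fun x => by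
  have hshift : (x + 2 * Real.pi) / 2 = x / 2 + Real.pi := by ring
  simp only [hshift, Real.sin_add_pi, mul_neg, neg_sq]

lemma periodic_vandermondeSq_update (θ : ι → ℝ) (i : ι) :
    Periodic (fun t => vandermondeSq (update θ i t)) (2 * Real.pi) := fun t => by
  refine Finset.prod_congr rfl fun p _ => ?_
  by_cases h₁ : p.1 = i <;> by_cases h₂ : p.2 = i <;> simp only [h₁, h₂, update_self,
    update_of_ne, ne_eq, not_false_eq_true, sub_self]
  · exact periodic_two_mul_sin_half_sq.sub_const _ t
  · exact periodic_two_mul_sin_half_sq.const_sub _ t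

lemma hasDerivAt_two_mul_sin_half_sq (x : ℝ) :
    HasDerivAt (fun x : ℝ => (2 * Real.sin (x / 2)) ^ 2)
      ((2 * Real.sin (x / 2)) ^ 2 * Real.cot (x / 2)) x := by
  refine ((((hasDerivAt_id x).div_const 2).sin.const_mul 2).fun_pow 2).congr_deriv ?_
  simp only [id, Real.cot_eq_cos_div_sin]
  -- At a zero of `sin (x / 2)` both sides vanish, since division by zero gives `0`.
  by_cases hsin : Real.sin (x / 2) = 0
  · simp [hsin]
  · push_cast
    field_simp

lemma fderiv_vandermondeSq (θ v : ι → ℝ) :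
    fderiv ℝ vandermondeSq θ v = vandermondeSq θ *
      ∑ p : ι × ι with p.1 < p.2, Real.cot ((θ p.1 - θ p.2) / 2) * (v p.1 - v p.2) := by
  have hfactor (p : ι × ι) :=
    (hasDerivAt_two_mul_sin_half_sq (θ p.1 - θ p.2)).comp_hasFDerivAt θ
      ((hasFDerivAt_apply (𝕜 := ℝ) (F' := fun _ : ι => ℝ) p.1 θ).fun_sub
        (hasFDerivAt_apply p.2 θ))
  have hprod : HasFDerivAt vandermondeSq _ θ := HasFDerivAt.finsetProd fun p _ => hfactor p
  rw [hprod.fderiv, vandermondeSq, Finset.mul_sum]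
  simp only [sum_apply]
  refine Finset.sum_congr rfl fun p hp => ?_
  rw [← Finset.mul_prod_erase _ _ hp]
  simp only [smul_apply, sub_apply, ContinuousLinearMap.proj_apply, smul_eq_mul]
  ring

lemma fderiv_vandermondeSq_one (θ : ι → ℝ) : fderiv ℝ vandermondeSq θ 1 = 0 := by
  simp [fderiv_vandermondeSq]

lemma vandermondeSq_mul_sum_cot (θ v : ι → ℝ) (d : ι × ι → ℝ) :
    vandermondeSq θ * ∑ p : ι × ι with p.1 ≠ p.2, (if θ p.1 = θ p.2 then d p
      else 1 / 2 * Real.cot ((θ p.1 - θ p.2) / 2) * (v p.1 - v p.2)) =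
      fderiv ℝ vandermondeSq θ v := by
  let f (p : ι × ι) : ℝ := 1 / 2 * Real.cot ((θ p.1 - θ p.2) / 2) * (v p.1 - v p.2)
  have hdiag : ∀ p ∈ Finset.univ.filter fun p : ι × ι => p.1 ≠ p.2,
      vandermondeSq θ * (if θ p.1 = θ p.2 then d p else f p) = vandermondeSq θ * f p := by
    intro p hp
    split_ifs with hθ
    · simp only [vandermondeSq_eq_zero_of_eq (Finset.mem_filter.mp hp).2 hθ, zero_mul]
    · rfl
  have hswap (p : ι × ι) : f p.swap = f p := by
    have hneg : (θ p.2 - θ p.1) / 2 = -((θ p.1 - θ p.2) / 2) := by ring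
    simp only [f, Prod.fst_swap, Prod.snd_swap, hneg, Real.cot_eq_cos_div_sin, Real.cos_neg,
      Real.sin_neg, div_neg]
    ring
  rw [Finset.mul_sum, Finset.sum_congr rfl hdiag, ← Finset.mul_sum,
    sum_fst_ne_snd_eq_two_nsmul_sum_lt hswap, fderiv_vandermondeSq, Finset.smul_sum]
  congr 1
  exact Finset.sum_congr rfl fun p _ => by simp only [f, nsmul_eq_mul]; push_cast; ring

end Vandermonde

/-- The CUE density vanishes where two angles coincide, so any value `d` may be assigned there. -/
theorem stmt10_general (n : ℕ) (h d : ℝ → ℝ)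
    (hint : IntegrableOn h (Icc (-Real.pi) Real.pi)) :
    cueExpect n (fun θ => -(1 / (n : ℝ)) *
      ∑ p ∈ Finset.univ.filter (fun p : Fin n × Fin n => p.1 ≠ p.2),
        (if θ p.1 = θ p.2 then d (θ p.1)
         else (1 / 2) * (Real.cos ((θ p.1 - θ p.2) / 2) / Real.sin ((θ p.1 - θ p.2) / 2))
           * (h (θ p.1) - h (θ p.2)))) = 0 := by
  have hweight (θ : Fin n → ℝ) :=
    vandermondeSq_mul_sum_cot θ (fun i => h (θ i)) fun p => d (θ p.1)
  have hface (θ : Fin n → ℝ) (i : Fin n) :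
      vandermondeSq (update θ i Real.pi) = vandermondeSq (update θ i (-Real.pi)) := by
    convert periodic_vandermondeSq_update θ i (-Real.pi) using 3
    ring
  rw [cueExpect_eq_integral_vandermondeSq]
  simp only [← Real.cot_eq_cos_div_sin, mul_left_comm (vandermondeSq _), hweight]
  rw [integral_const_mul, setIntegral_fderiv_apply_eq_zero (u := fun _ => h)
    (fun _ => neg_le_self Real.pi_nonneg) contDiff_vandermondeSq hface
    fderiv_vandermondeSq_one fun _ => hint, mul_zero, mul_zero]

/-- For a smooth `2π`-periodic `h`, the CUE expectation of
`U_n(θ) = −(1/n) ∑_{μ≠ν} (1/2)cot((θ_μ−θ_ν)/2)(h(θ_μ)−h(θ_ν))` vanishes, where the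
summand is interpreted by its continuous extension at coinciding angles. -/
theorem stmt10 (n : ℕ) (hn : 1 ≤ n) (h : ℝ → ℝ)
    (hsm : ContDiff ℝ (⊤ : ℕ∞) h) (hper : Function.Periodic h (2 * Real.pi)) :
    cueExpect n (fun θ => -(1 / (n : ℝ)) *
      ∑ p ∈ Finset.univ.filter (fun p : Fin n × Fin n => p.1 ≠ p.2),
        (if θ p.1 = θ p.2 then deriv h (θ p.1)
         else (1 / 2) * (Real.cos ((θ p.1 - θ p.2) / 2) / Real.sin ((θ p.1 - θ p.2) / 2))
           * (h (θ p.1) - h (θ p.2)))) = 0 :=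
  stmt10_general n h (deriv h) hsm.continuous.integrableOn_Icc
end

section
/- Let φ be holomorphic and injective on the exterior disk Δ = {z ∈ ℂ : |z| > 1}, with Laurent expansion φ(z) = z + φ₀ + ∑_{k≥1} φ_{-k} z^{-k} at infinity, and let n ≥ 1. Then the function E_n is twice continuously differentiable on (1, ∞) and satisfies r E_n''(r) + E_n'(r) ≥ 0 for all r > 1. -/
open MeasureTheory Filter

/-- The partition function `Z_n(γ_r)` of the Coulomb gas (at `β = 2`) on the analytic
curve `γ_r`, the image of the unit circle under `φ_r(z) = φ(rz)/r`:
`Z_n(r) = (1/(n! r^{n(n-1)})) ∫_{[−π,π]^n} ∏_{μ<ν} |φ(re^{iθ_μ}) − φ(re^{iθ_ν})|²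
∏_μ |φ'(re^{iθ_μ})| dθ`. -/
noncomputable def Zn (φ : ℂ → ℂ) (n : ℕ) (r : ℝ) : ℝ :=
  (1 / (n.factorial * r ^ (n * (n - 1)))) *
    ∫ θ in Set.pi Set.univ (fun _ : Fin n => Set.Icc (-Real.pi) Real.pi),
      (∏ p ∈ Finset.univ.filter (fun p : Fin n × Fin n => p.1 < p.2),
        ‖φ ((r : ℂ) * Complex.exp (Complex.I * (θ p.1 : ℂ)))
          - φ ((r : ℂ) * Complex.exp (Complex.I * (θ p.2 : ℂ)))‖ ^ 2) *
      ∏ μ, ‖deriv φ ((r : ℂ) * Complex.exp (Complex.I * (θ μ : ℂ)))‖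

/-- `E_n(r) = log(Z_n(r)/(2π)^n)`, the "finite `n` Loewner energy" of `γ_r`. -/
noncomputable def En (φ : ℂ → ℂ) (n : ℕ) (r : ℝ) : ℝ :=
  Real.log (Zn φ n r / (2 * Real.pi) ^ n)

/-!
In the coordinate `w = log z` the integrand of `Zn`, including the factor `r^{-n(n-1)}`, is locally
the squared modulus of a holomorphic function of `w`: the pair factors are squared moduli already,
and `|φ'|` is the squared modulus of a branch of `√φ'`, since a univalent function has no critical
point. Hence the integrand `u` satisfies `(∂ₓu)² ≤ u Δu`, and by the Cauchy–Schwarz inequality so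
does its integral `F` over the angles. Rotating all charges does not change `F`, so `F` depends on
`x = Re w` only, and the inequality reads `F'² ≤ F F''`: `log F` is convex. With
`E_n(r) = log F(log r)`, this is the claim, because `r E_n''(r) + E_n'(r) = (log F)''(log r) / r`.
-/

open Set Topology
open scoped ContDiff InnerProductSpace

section Univalent

variable {f : ℂ → ℂ} {U : Set ℂ} {z : ℂ}

lemma not_eventually_eq_of_injOn (hinj : InjOn f U) (hU : U ∈ 𝓝 z) :
    ¬∀ᶠ w in 𝓝 z, f w = f z := by
  intro hconst
  have hfalse : ∀ᶠ _ in 𝓝[≠] z, False := by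
    filter_upwards [hconst.filter_mono nhdsWithin_le_nhds, mem_nhdsWithin_of_mem_nhds hU,
      self_mem_nhdsWithin] with w hw hwU hne
    exact hne (hinj hwU (mem_of_mem_nhds hU) hw)
  exact hfalse.exists.choose_spec

lemma eventually_deriv_ne_zero_of_injOn (hf : AnalyticAt ℂ f z) (hinj : InjOn f U)
    (hU : U ∈ 𝓝 z) : ∀ᶠ w in 𝓝[≠] z, deriv f w ≠ 0 := by
  refine hf.deriv.eventually_eq_zero_or_eventually_ne_zero.resolve_left fun hzero ↦
    not_eventually_eq_of_injOn hinj hU ?_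
  obtain ⟨ε, hε, hball⟩ := Metric.eventually_nhds_iff_ball.1 (hzero.and hf.eventually_analyticAt)
  filter_upwards [Metric.ball_mem_nhds z hε] with w hw
  exact Metric.isOpen_ball.is_const_of_deriv_eq_zero (convex_ball z ε).isPreconnected
    (fun v hv ↦ (hball v hv).2.differentiableAt.differentiableWithinAt)
    (fun v hv ↦ (hball v hv).1) hw (Metric.mem_ball_self hε)

lemma nhds_le_map_nhds_of_injOn (hf : AnalyticAt ℂ f z) (hinj : InjOn f U) (hU : U ∈ 𝓝 z) :
    𝓝 (f z) ≤ map f (𝓝 z) :=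
  hf.eventually_constant_or_nhds_le_map_nhds.resolve_left (not_eventually_eq_of_injOn hinj hU)

lemma continuousAt_invFunOn_of_injOn (hf : AnalyticAt ℂ f z) (hinj : InjOn f U) (hU : U ∈ 𝓝 z) :
    ContinuousAt (Function.invFunOn f U) (f z) := by
  have hleft : LeftInvOn (Function.invFunOn f U) f U := hinj.leftInvOn_invFunOn
  rw [ContinuousAt, hleft (mem_of_mem_nhds hU)]
  refine (tendsto_map'_iff.2 (tendsto_id.congr' ?_)).mono_left
    (nhds_le_map_nhds_of_injOn hf hinj hU)
  filter_upwards [hU] with w hw using (hleft hw).symm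

lemma differentiableAt_invFunOn_of_injOn (hf : AnalyticAt ℂ f z) (hinj : InjOn f U)
    (hU : U ∈ 𝓝 z) (hderiv : deriv f z ≠ 0) :
    DifferentiableAt ℂ (Function.invFunOn f U) (f z) := by
  have hleft : LeftInvOn (Function.invFunOn f U) f U := hinj.leftInvOn_invFunOn
  have hright : ∀ᶠ y in 𝓝 (f z), f (Function.invFunOn f U y) = y :=
    nhds_le_map_nhds_of_injOn hf hinj hU <| eventually_map.2 <| by
      filter_upwards [hU] with w hw using congrArg f (hleft hw)
  have hf' : HasDerivAt f (deriv f z) (Function.invFunOn f U (f z)) := by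
    simpa only [hleft (mem_of_mem_nhds hU)] using hf.differentiableAt.hasDerivAt
  exact (hf'.of_local_left_inverse (continuousAt_invFunOn_of_injOn hf hinj hU) hderiv
    hright).differentiableAt

/- The inverse is holomorphic off the isolated critical values and continuous there, hence
holomorphic everywhere; the chain rule then forbids critical points. -/
theorem deriv_ne_zero_of_injOn (hf : DifferentiableOn ℂ f U) (hU : IsOpen U)
    (hinj : InjOn f U) (hz : z ∈ U) : deriv f z ≠ 0 := by
  have hnhds : ∀ w ∈ U, U ∈ 𝓝 w := fun w hw ↦ hU.mem_nhds hw
  have han : ∀ w ∈ U, AnalyticAt ℂ f w := fun w hw ↦ hf.analyticAt (hnhds w hw)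
  have hpunctured : ∀ᶠ y in 𝓝[≠] f z, DifferentiableAt ℂ (Function.invFunOn f U) y := by
    refine eventually_nhdsWithin_iff.2
      (nhds_le_map_nhds_of_injOn (han z hz) hinj (hnhds z hz) (eventually_map.2 ?_))
    filter_upwards [eventually_nhdsWithin_iff.1
      (eventually_deriv_ne_zero_of_injOn (han z hz) hinj (hnhds z hz)), hnhds z hz]
      with w hw hwU hne
    exact differentiableAt_invFunOn_of_injOn (han w hwU) hinj (hnhds w hwU)
      (hw (ne_of_apply_ne f hne))
  have hinv : AnalyticAt ℂ (Function.invFunOn f U) (f z) :=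
    Complex.analyticAt_of_differentiable_on_punctured_nhds_of_continuousAt hpunctured
      (continuousAt_invFunOn_of_injOn (han z hz) hinj (hnhds z hz))
  have hid : HasDerivAt (Function.invFunOn f U ∘ f) 1 z :=
    (hasDerivAt_id z).congr_of_eventuallyEq <| by
      filter_upwards [hnhds z hz] with w hw using hinj.leftInvOn_invFunOn hw
  have hchain := hinv.differentiableAt.hasDerivAt.comp z (han z hz).differentiableAt.hasDerivAt
  exact right_ne_zero_of_mul_eq_one (hchain.unique hid)

end Univalent

section IsNormSqAt

/-- `IsNormSqAt u z` says that near `z` the function `u` is the squared modulus of a holomorphic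
function. It is the form in which log-subharmonicity of the Coulomb gas density is used; zeros of
the holomorphic function are allowed. -/
def IsNormSqAt (u : ℂ → ℝ) (z : ℂ) : Prop :=
  ∃ h : ℂ → ℂ, AnalyticAt ℂ h z ∧ ∀ᶠ w in 𝓝 z, u w = ‖h w‖ ^ 2

variable {u v : ℂ → ℝ} {f : ℂ → ℂ} {z : ℂ}

lemma isNormSqAt_norm_sq (hf : AnalyticAt ℂ f z) : IsNormSqAt (fun w ↦ ‖f w‖ ^ 2) z :=
  ⟨f, hf, .of_forall fun _ ↦ rfl⟩

lemma isNormSqAt_const {a : ℝ} (ha : 0 ≤ a) : IsNormSqAt (fun _ ↦ a) z :=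
  ⟨fun _ ↦ √a, analyticAt_const, .of_forall fun _ ↦ by simp [ha]⟩

lemma IsNormSqAt.mul (hu : IsNormSqAt u z) (hv : IsNormSqAt v z) : IsNormSqAt (u * v) z := by
  obtain ⟨g, hg, hug⟩ := hu
  obtain ⟨h, hh, hvh⟩ := hv
  refine ⟨g * h, hg.mul hh, ?_⟩
  filter_upwards [hug, hvh] with w hgw hhw
  simp only [Pi.mul_apply, hgw, hhw, norm_mul, mul_pow]

lemma isNormSqAt_prod {ι : Type*} {s : Finset ι} {u : ι → ℂ → ℝ}
    (hu : ∀ i ∈ s, IsNormSqAt (u i) z) : IsNormSqAt (fun w ↦ ∏ i ∈ s, u i w) z := by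
  rw [← Finset.prod_fn]
  exact Finset.prod_induction u (IsNormSqAt · z) (fun _ _ ↦ IsNormSqAt.mul)
    (isNormSqAt_const zero_le_one) hu

/- Near `z`, the function `√‖f z‖ * exp (log (f w / f z) / 2)` is, up to a unimodular constant, a
branch of `√f`. -/
lemma isNormSqAt_norm (hf : AnalyticAt ℂ f z) (hz : f z ≠ 0) : IsNormSqAt (fun w ↦ ‖f w‖) z := by
  have hlog : AnalyticAt ℂ (fun w ↦ Complex.log (f w / f z)) z :=
    (hf.div analyticAt_const hz).clog (by simp [div_self hz])
  refine ⟨fun w ↦ √‖f z‖ * Complex.exp (Complex.log (f w / f z) / 2),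
    analyticAt_const.mul (hlog.div analyticAt_const two_ne_zero).cexp, ?_⟩
  filter_upwards [hf.continuousAt.eventually_ne hz] with w hw
  have hsq : Complex.exp (Complex.log (f w / f z) / 2) ^ 2 = f w / f z := by
    rw [← Complex.exp_nat_mul, Nat.cast_ofNat, mul_div_cancel₀ _ two_ne_zero,
      Complex.exp_log (div_ne_zero hw hz)]
  rw [norm_mul, mul_pow, ← norm_pow (Complex.exp _), hsq, norm_div, Complex.norm_real,
    Real.norm_eq_abs, sq_abs, Real.sq_sqrt (norm_nonneg _),
    mul_div_cancel₀ _ (norm_ne_zero_iff.2 hz)]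

lemma hasDerivAt_comp_add_ofReal_mul {h : ℂ → ℂ} {h' e : ℂ} {s : ℝ}
    (hh : HasDerivAt h h' (z + s * e)) :
    HasDerivAt (fun s : ℝ ↦ h (z + s * e)) (e * h') s := by
  have hline : HasDerivAt (fun s : ℝ ↦ z + s * e) e s := by
    simpa using ((hasDerivAt_id (s : ℂ)).comp_ofReal.mul_const e).const_add z
  exact hh.scomp s hline

lemma hasDerivAt_norm_sq_line {h : ℂ → ℂ} (e : ℂ) {s : ℝ} (hh : AnalyticAt ℂ h (z + s * e)) :
    HasDerivAt (fun s : ℝ ↦ ‖h (z + s * e)‖ ^ 2)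
      (2 * ⟪h (z + s * e), e * deriv h (z + s * e)⟫_ℝ) s :=
  (hasDerivAt_comp_add_ofReal_mul hh.differentiableAt.hasDerivAt).norm_sq

lemma deriv_deriv_norm_sq_line {h : ℂ → ℂ} (e : ℂ) {s : ℝ} (hh : AnalyticAt ℂ h (z + s * e)) :
    deriv (deriv fun s : ℝ ↦ ‖h (z + s * e)‖ ^ 2) s =
      2 * (⟪h (z + s * e), e ^ 2 * deriv (deriv h) (z + s * e)⟫_ℝ +
        ‖e * deriv h (z + s * e)‖ ^ 2) := by
  have hline : ContinuousAt (fun s : ℝ ↦ z + s * e) s := by fun_prop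
  have hderiv : (deriv fun s : ℝ ↦ ‖h (z + s * e)‖ ^ 2) =ᶠ[𝓝 s]
      fun s ↦ 2 * ⟪h (z + s * e), e * deriv h (z + s * e)⟫_ℝ := by
    filter_upwards [hline.eventually hh.eventually_analyticAt] with x hx
    exact (hasDerivAt_norm_sq_line e hx).deriv
  have h₀ := hasDerivAt_comp_add_ofReal_mul hh.differentiableAt.hasDerivAt
  have h₁ := (hasDerivAt_comp_add_ofReal_mul hh.deriv.differentiableAt.hasDerivAt).const_mul e
  rw [hderiv.deriv_eq, ((h₀.inner ℝ h₁).const_mul 2).deriv, real_inner_self_eq_norm_sq,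
    ← mul_assoc e e, ← sq]

lemma IsNormSqAt.exists_deriv_eq (hu : IsNormSqAt u z) : ∃ a b : ℂ, u z = ‖a‖ ^ 2 ∧
    deriv (fun s : ℝ ↦ u (z + s)) 0 = 2 * ⟪a, b⟫_ℝ ∧
    deriv (deriv fun s : ℝ ↦ u (z + s)) 0 + deriv (deriv fun s : ℝ ↦ u (z + s * Complex.I)) 0 =
      4 * ‖b‖ ^ 2 := by
  obtain ⟨h, hh, huh⟩ := hu
  have heq (e : ℂ) : (fun s : ℝ ↦ u (z + s * e)) =ᶠ[𝓝 0] fun s ↦ ‖h (z + s * e)‖ ^ 2 := by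
    have hline : ContinuousAt (fun s : ℝ ↦ z + s * e) 0 := by fun_prop
    exact hline.eventually (by simpa using huh)
  have hz (e : ℂ) : AnalyticAt ℂ h (z + (0 : ℝ) * e) := by simpa using hh
  have hfirst : deriv (fun s : ℝ ↦ u (z + s)) 0 = 2 * ⟪h z, deriv h z⟫_ℝ := by
    simpa using (heq 1).deriv_eq.trans (hasDerivAt_norm_sq_line 1 (hz 1)).deriv
  have hreal : deriv (deriv fun s : ℝ ↦ u (z + s)) 0 =
      2 * (⟪h z, deriv (deriv h) z⟫_ℝ + ‖deriv h z‖ ^ 2) := by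
    simpa using (heq 1).deriv.deriv_eq.trans (deriv_deriv_norm_sq_line 1 (hz 1))
  have himag : deriv (deriv fun s : ℝ ↦ u (z + s * Complex.I)) 0 =
      2 * (-⟪h z, deriv (deriv h) z⟫_ℝ + ‖deriv h z‖ ^ 2) := by
    simpa using (heq Complex.I).deriv.deriv_eq.trans (deriv_deriv_norm_sq_line Complex.I (hz _))
  exact ⟨h z, deriv h z, huh.self_of_nhds, hfirst, by rw [hreal, himag]; ring⟩

lemma IsNormSqAt.nonneg (hu : IsNormSqAt u z) : 0 ≤ u z := by
  obtain ⟨h, -, huh⟩ := hu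
  exact huh.self_of_nhds ▸ sq_nonneg _

lemma IsNormSqAt.deriv_deriv_add_deriv_deriv_nonneg (hu : IsNormSqAt u z) :
    0 ≤ deriv (deriv fun s : ℝ ↦ u (z + s)) 0 +
      deriv (deriv fun s : ℝ ↦ u (z + s * Complex.I)) 0 := by
  obtain ⟨a, b, -, -, hlap⟩ := hu.exists_deriv_eq
  rw [hlap]
  positivity

lemma IsNormSqAt.sq_deriv_le (hu : IsNormSqAt u z) :
    deriv (fun s : ℝ ↦ u (z + s)) 0 ^ 2 ≤
      u z * (deriv (deriv fun s : ℝ ↦ u (z + s)) 0 +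
        deriv (deriv fun s : ℝ ↦ u (z + s * Complex.I)) 0) := by
  obtain ⟨a, b, hval, hfirst, hlap⟩ := hu.exists_deriv_eq
  rw [hval, hfirst, hlap]
  calc (2 * ⟪a, b⟫_ℝ) ^ 2 = 4 * |⟪a, b⟫_ℝ| ^ 2 := by rw [sq_abs]; ring
    _ ≤ 4 * (‖a‖ * ‖b‖) ^ 2 := by gcongr; exact abs_real_inner_le_norm _ _
    _ = ‖a‖ ^ 2 * (4 * ‖b‖ ^ 2) := by ring

end IsNormSqAt

section ParametricIntegral

variable {X E : Type*} [NormedAddCommGroup E] [NormedSpace ℝ E] {K : Set X} {I : Set ℝ} {t : ℝ}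

lemma hasDerivAt_setIntegral_of_isCompact [TopologicalSpace X] [T2Space X] [MeasurableSpace X]
    [OpensMeasurableSpace X] {μ : Measure X} [IsFiniteMeasureOnCompacts μ] {f f' : ℝ → X → E}
    (hK : IsCompact K) (hI : IsOpen I) (hf : ∀ s ∈ I, ContinuousOn (f s) K)
    (hf' : ContinuousOn (Function.uncurry f') (I ×ˢ K))
    (hderiv : ∀ s ∈ I, ∀ x ∈ K, HasDerivAt (f · x) (f' s x) s) (ht : t ∈ I) :
    HasDerivAt (fun s ↦ ∫ x in K, f s x ∂μ) (∫ x in K, f' t x ∂μ) t := by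
  obtain ⟨ε, hε, hball⟩ := Metric.nhds_basis_closedBall.mem_iff.1 (hI.mem_nhds ht)
  obtain ⟨C, hC⟩ := ((isCompact_closedBall t ε).prod hK).exists_bound_of_continuousOn
    (hf'.mono (prod_mono_left hball))
  have hf't : ContinuousOn (f' t) K :=
    hf'.comp (f := fun x ↦ (t, x)) (by fun_prop) fun x hx ↦ ⟨ht, hx⟩
  refine (hasDerivAt_integral_of_dominated_loc_of_deriv_le (bound := fun _ ↦ C)
    (Metric.closedBall_mem_nhds t hε) ?_ ((hf t ht).integrableOn_compact hK)
    (hf't.aestronglyMeasurable_of_isCompact hK hK.measurableSet) ?_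
    (integrableOn_const hK.measure_ne_top) ?_).2
  · filter_upwards [hI.mem_nhds ht] with s hs
    exact (hf s hs).aestronglyMeasurable_of_isCompact hK hK.measurableSet
  · filter_upwards [ae_restrict_mem hK.measurableSet] with x hx s hs using hC (s, x) ⟨hs, hx⟩
  · filter_upwards [ae_restrict_mem hK.measurableSet] with x hx s hs using hderiv s (hball hs) x hx

variable [NormedAddCommGroup X] [NormedSpace ℝ X] {f : ℝ × X → E}

lemma hasDerivAt_comp_prodMk_left {x : X} (hf : DifferentiableAt ℝ f (t, x)) :
    HasDerivAt (fun s ↦ f (s, x)) (fderiv ℝ f (t, x) (1, 0)) t :=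
  hf.hasFDerivAt.comp_hasDerivAt t ((hasDerivAt_id t).prodMk (hasDerivAt_const t x))

lemma contDiffOn_partial_deriv (hI : IsOpen I) (hf : ContDiffOn ℝ ∞ f (I ×ˢ univ)) :
    ContDiffOn ℝ ∞ (fun p : ℝ × X ↦ deriv (fun s ↦ f (s, p.2)) p.1) (I ×ˢ univ) := by
  have hopen : IsOpen (I ×ˢ (univ : Set X)) := hI.prod isOpen_univ
  refine ((hf.fderiv_of_isOpen hopen (m := ∞) le_rfl).clm_apply
    (contDiffOn_const (c := ((1, 0) : ℝ × X)))).congr fun p hp ↦ ?_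
  exact (hasDerivAt_comp_prodMk_left
    ((hf.contDiffAt (hopen.mem_nhds hp)).differentiableAt (by simp))).deriv

lemma continuous_of_contDiffOn_prod_univ (hf : ContDiffOn ℝ ∞ f (I ×ˢ univ)) (ht : t ∈ I) :
    Continuous fun x ↦ f (t, x) :=
  hf.continuousOn.comp_continuous (by fun_prop) fun _ ↦ ⟨ht, mem_univ _⟩

variable [MeasurableSpace X] [OpensMeasurableSpace X] {μ : Measure X} [IsFiniteMeasureOnCompacts μ]

lemma hasDerivAt_setIntegral_of_contDiffOn (hK : IsCompact K) (hI : IsOpen I)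
    (hf : ContDiffOn ℝ ∞ f (I ×ˢ univ)) (ht : t ∈ I) :
    HasDerivAt (fun s ↦ ∫ x in K, f (s, x) ∂μ) (∫ x in K, deriv (fun s ↦ f (s, x)) t ∂μ) t := by
  refine hasDerivAt_setIntegral_of_isCompact (f' := fun s x ↦ deriv (fun s ↦ f (s, x)) s) hK hI
    (fun s hs ↦ (continuous_of_contDiffOn_prod_univ hf hs).continuousOn)
    ((contDiffOn_partial_deriv hI hf).continuousOn.mono (prod_mono_right (subset_univ K)))
    (fun s hs x _ ↦ ?_) ht
  have hfs : ContDiffAt ℝ ∞ f (s, x) :=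
    hf.contDiffAt ((hI.prod isOpen_univ).mem_nhds ⟨hs, mem_univ x⟩)
  exact (hasDerivAt_comp_prodMk_left (hfs.differentiableAt (by simp))).differentiableAt.hasDerivAt

lemma deriv_deriv_setIntegral_of_contDiffOn (hK : IsCompact K) (hI : IsOpen I)
    (hf : ContDiffOn ℝ ∞ f (I ×ˢ univ)) (ht : t ∈ I) :
    deriv (deriv fun s ↦ ∫ x in K, f (s, x) ∂μ) t =
      ∫ x in K, deriv (deriv fun s ↦ f (s, x)) t ∂μ := by
  have hderiv : (deriv fun s ↦ ∫ x in K, f (s, x) ∂μ) =ᶠ[𝓝 t]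
      fun s ↦ ∫ x in K, deriv (fun s ↦ f (s, x)) s ∂μ := by
    filter_upwards [hI.mem_nhds ht] with s hs
    exact (hasDerivAt_setIntegral_of_contDiffOn hK hI hf hs).deriv
  rw [hderiv.deriv_eq]
  exact (hasDerivAt_setIntegral_of_contDiffOn hK hI (contDiffOn_partial_deriv hI hf) ht).deriv

lemma contDiffOn_setIntegral (hK : IsCompact K) (hI : IsOpen I)
    (hf : ContDiffOn ℝ ∞ f (I ×ˢ univ)) :
    ContDiffOn ℝ ∞ (fun s ↦ ∫ x in K, f (s, x) ∂μ) I := by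
  refine contDiffOn_infty.2 fun k ↦ ?_
  induction k generalizing f with
  | zero =>
    exact contDiffOn_zero.2 fun s hs ↦
      (hasDerivAt_setIntegral_of_contDiffOn hK hI hf hs).continuousAt.continuousWithinAt
  | succ k ih =>
    refine (contDiffOn_succ_iff_deriv_of_isOpen hI).2 ⟨fun s hs ↦
      (hasDerivAt_setIntegral_of_contDiffOn hK hI hf hs).differentiableAt.differentiableWithinAt,
      by simp, (ih (contDiffOn_partial_deriv hI hf)).congr fun s hs ↦ ?_⟩
    exact (hasDerivAt_setIntegral_of_contDiffOn hK hI hf hs).deriv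

end ParametricIntegral

section Convexity

lemma quadratic_nonneg_of_sq_le_mul {a b c : ℝ} (ha : 0 ≤ a) (hc : 0 ≤ c) (h : b ^ 2 ≤ a * c)
    (l : ℝ) : 0 ≤ a * (l * l) + 2 * b * l + c := by
  have hb : |b * l| ≤ √a * |l| * √c := by
    rw [abs_mul, mul_right_comm, ← Real.sqrt_mul ha]
    gcongr
    exact Real.abs_le_sqrt h
  nlinarith [neg_abs_le (b * l), sq_nonneg (√a * |l| - √c), Real.sq_sqrt ha, Real.sq_sqrt hc,
    sq_abs l]

lemma sq_integral_le_integral_mul_integral {α : Type*} [MeasurableSpace α] {μ : Measure α}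
    {a b c : α → ℝ} (ha : Integrable a μ) (hb : Integrable b μ) (hc : Integrable c μ)
    (ha₀ : 0 ≤ᵐ[μ] a) (hc₀ : 0 ≤ᵐ[μ] c) (h : ∀ᵐ x ∂μ, b x ^ 2 ≤ a x * c x) :
    (∫ x, b x ∂μ) ^ 2 ≤ (∫ x, a x ∂μ) * ∫ x, c x ∂μ := by
  have hquad (l : ℝ) :
      0 ≤ (∫ x, a x ∂μ) * (l * l) + 2 * (∫ x, b x ∂μ) * l + ∫ x, c x ∂μ := by
    have hal : Integrable (fun x ↦ a x * (l * l)) μ := ha.mul_const _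
    have hbl : Integrable (fun x ↦ 2 * b x * l) μ := (hb.const_mul 2).mul_const l
    have hsum : Integrable (fun x ↦ a x * (l * l) + 2 * b x * l) μ := hal.add hbl
    have hexpand : ∫ x, a x * (l * l) + 2 * b x * l + c x ∂μ =
        (∫ x, a x ∂μ) * (l * l) + 2 * (∫ x, b x ∂μ) * l + ∫ x, c x ∂μ := by
      rw [integral_add hsum hc, integral_add hal hbl, integral_mul_const,
        integral_mul_const, integral_const_mul]
    rw [← hexpand]
    refine integral_nonneg_of_ae ?_
    filter_upwards [ha₀, hc₀, h] with x hax hcx hx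
    exact quadratic_nonneg_of_sq_le_mul hax hcx hx l
  have hdiscrim := discrim_le_zero hquad
  rw [discrim] at hdiscrim
  linarith

section LogSubharmonic

variable {X : Type*} [NormedAddCommGroup X] [NormedSpace ℝ X] {u : ℂ × X → ℝ} {U : Set ℂ} {z : ℂ}

lemma contDiffOn_comp_line (hu : ContDiffOn ℝ ∞ u (U ×ˢ univ)) (z e : ℂ) :
    ContDiffOn ℝ ∞ (fun p : ℝ × X ↦ u (z + p.1 * e, p.2))
      (((fun s : ℝ ↦ z + s * e) ⁻¹' U) ×ˢ univ) := by
  have hcast : ContDiff ℝ ∞ ((↑) : ℝ → ℂ) := Complex.ofRealCLM.contDiff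
  exact hu.comp (f := fun p : ℝ × X ↦ ((z + p.1 * e : ℂ), p.2)) (by fun_prop)
    fun p hp ↦ ⟨hp.1, mem_univ _⟩

theorem sq_deriv_setIntegral_le [MeasurableSpace X] [OpensMeasurableSpace X] {μ : Measure X}
    [IsFiniteMeasureOnCompacts μ] {K : Set X} (hK : IsCompact K) (hU : IsOpen U)
    (hu : ContDiffOn ℝ ∞ u (U ×ˢ univ)) (hz : z ∈ U)
    (hsq : ∀ x ∈ K, IsNormSqAt (fun w ↦ u (w, x)) z) :
    deriv (fun s : ℝ ↦ ∫ x in K, u (z + s, x) ∂μ) 0 ^ 2 ≤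
      (∫ x in K, u (z, x) ∂μ) *
        (deriv (deriv fun s : ℝ ↦ ∫ x in K, u (z + s, x) ∂μ) 0 +
          deriv (deriv fun s : ℝ ↦ ∫ x in K, u (z + s * Complex.I, x) ∂μ) 0) := by
  have hopen (e : ℂ) : IsOpen ((fun s : ℝ ↦ z + s * e) ⁻¹' U) := hU.preimage (by fun_prop)
  have h₀ (e : ℂ) : (0 : ℝ) ∈ (fun s : ℝ ↦ z + s * e) ⁻¹' U := by simpa using hz
  have hu' (e : ℂ) := contDiffOn_partial_deriv (hopen e) (contDiffOn_comp_line hu z e)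
  have hu'' (e : ℂ) := contDiffOn_partial_deriv (hopen e) (hu' e)
  have hint {f : ℝ × X → ℝ} {J : Set ℝ} (hf : ContDiffOn ℝ ∞ f (J ×ˢ univ)) (hJ : 0 ∈ J) :
      IntegrableOn (fun x ↦ f (0, x)) K μ :=
    (continuous_of_contDiffOn_prod_univ hf hJ).continuousOn.integrableOn_compact hK
  have hfirst (e : ℂ) :=
    (hasDerivAt_setIntegral_of_contDiffOn (μ := μ) hK (hopen e) (contDiffOn_comp_line hu z e)
      (h₀ e)).deriv
  have hsecond (e : ℂ) :=
    deriv_deriv_setIntegral_of_contDiffOn (μ := μ) hK (hopen e) (contDiffOn_comp_line hu z e) (h₀ e)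
  have ha := hint (contDiffOn_comp_line hu z 1) (h₀ 1)
  have hb := hint (hu' 1) (h₀ 1)
  have hc₁ := hint (hu'' 1) (h₀ 1)
  have hc₂ := hint (hu'' Complex.I) (h₀ Complex.I)
  have hfirst_re := hfirst 1
  have hsecond_re := hsecond 1
  simp only [mul_one, Complex.ofReal_zero, add_zero] at ha hb hc₁ hfirst_re hsecond_re
  rw [hfirst_re, hsecond_re, hsecond Complex.I, ← integral_add hc₁ hc₂]
  refine sq_integral_le_integral_mul_integral ha hb (hc₁.add hc₂) ?_ ?_ ?_ <;>
    filter_upwards [ae_restrict_mem hK.measurableSet] with x hx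
  · exact (hsq x hx).nonneg
  · exact (hsq x hx).deriv_deriv_add_deriv_deriv_nonneg
  · exact (hsq x hx).sq_deriv_le

end LogSubharmonic

lemma sq_deriv_le_of_vertical_invariant {F : ℂ → ℝ} {t : ℝ}
    (hF : ∀ s : ℝ, F (t + s * Complex.I) = F t)
    (h : deriv (fun s : ℝ ↦ F (t + s)) 0 ^ 2 ≤ F t * (deriv (deriv fun s : ℝ ↦ F (t + s)) 0 +
      deriv (deriv fun s : ℝ ↦ F (t + s * Complex.I)) 0)) :
    deriv (fun s : ℝ ↦ F s) t ^ 2 ≤ F t * deriv (deriv fun s : ℝ ↦ F s) t := by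
  have hfirst : (deriv fun s : ℝ ↦ F (t + s)) = fun s ↦ deriv (fun s : ℝ ↦ F s) (t + s) := by
    funext s
    simpa using deriv_comp_const_add (fun s : ℝ ↦ F s) t s
  have hsecond : deriv (deriv fun s : ℝ ↦ F (t + s)) 0 = deriv (deriv fun s : ℝ ↦ F s) t := by
    rw [hfirst, deriv_comp_const_add, add_zero]
  rw [hsecond, congrFun hfirst 0, add_zero] at h
  simpa [hF] using h

end Convexity

section Torus

variable {ι E : Type*} [Fintype ι] {T : ℝ} [Fact (0 < T)] [NormedAddCommGroup E] [NormedSpace ℝ E]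

lemma measurePreserving_pi_addCircle_mk (a : ℝ) :
    MeasurePreserving (fun (θ : ι → ℝ) j ↦ (θ j : AddCircle T))
      (volume.restrict (univ.pi fun _ ↦ Icc a (a + T))) volume := by
  have hbox : volume.restrict (univ.pi fun _ : ι ↦ Icc a (a + T)) =
      Measure.pi fun _ ↦ volume.restrict (Ioc a (a + T)) := by
    rw [volume_pi, Measure.restrict_pi_pi]
    simp only [Measure.restrict_congr_set Ioc_ae_eq_Icc.symm]
  rw [hbox]
  exact measurePreserving_pi _ _ fun _ ↦ AddCircle.measurePreserving_mk T a

lemma setIntegral_pi_addCircle_mk {g : (ι → AddCircle T) → E} (hg : AEStronglyMeasurable g volume)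
    (a : ℝ) : ∫ θ in univ.pi fun _ : ι ↦ Icc a (a + T), g (fun j ↦ θ j) = ∫ x, g x := by
  have hmk := measurePreserving_pi_addCircle_mk (ι := ι) (T := T) a
  rw [← hmk.map_eq] at hg ⊢
  exact (integral_map hmk.measurable.aemeasurable hg).symm

lemma setIntegral_pi_addCircle_add_left {g : (ι → AddCircle T) → E}
    (hg : AEStronglyMeasurable g volume) (a : ℝ) (x : ι → AddCircle T) :
    ∫ θ in univ.pi fun _ : ι ↦ Icc a (a + T), g (fun j ↦ x j + θ j) =
      ∫ θ in univ.pi fun _ : ι ↦ Icc a (a + T), g (fun j ↦ θ j) := by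
  have hgx := hg.comp_measurePreserving (measurePreserving_add_left volume x)
  rw [setIntegral_pi_addCircle_mk hg]
  exact (setIntegral_pi_addCircle_mk hgx a).trans (integral_add_left_eq_self g x)

end Torus

section Calculus

lemma setIntegral_pos_of_continuous_of_mem_interior {X : Type*} [TopologicalSpace X] [T2Space X]
    [MeasurableSpace X] [OpensMeasurableSpace X] {μ : Measure X} [IsFiniteMeasureOnCompacts μ]
    [μ.IsOpenPosMeasure] {K : Set X} {f : X → ℝ} {x : X} (hK : IsCompact K) (hf : Continuous f)
    (hf₀ : 0 ≤ f) (hx : x ∈ interior K) (hfx : f x ≠ 0) : 0 < ∫ x in K, f x ∂μ := by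
  rw [setIntegral_pos_iff_support_of_nonneg_ae (.of_forall hf₀)
    (hf.continuousOn.integrableOn_compact hK)]
  exact ((hf.isOpen_support.inter isOpen_interior).measure_pos μ ⟨x, hfx, hx⟩).trans_le
    (measure_mono (inter_subset_inter_right _ interior_subset))

lemma mul_deriv_deriv_comp_log_add_deriv {g : ℝ → ℝ} {r : ℝ} (hr : 0 < r)
    (hg : ContDiffAt ℝ 2 g (Real.log r)) :
    r * deriv (deriv fun r ↦ g (Real.log r)) r + deriv (fun r ↦ g (Real.log r)) r =
      deriv (deriv g) (Real.log r) / r := by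
  have hlog := Real.hasDerivAt_log hr.ne'
  have hfirst : deriv (fun r ↦ g (Real.log r)) =ᶠ[𝓝 r] fun r ↦ deriv g (Real.log r) * r⁻¹ := by
    filter_upwards [lt_mem_nhds hr, hlog.continuousAt.eventually (hg.eventually (by simp))]
      with s hs hgs
    exact ((hgs.differentiableAt two_ne_zero).hasDerivAt.comp s (Real.hasDerivAt_log hs.ne')).deriv
  have hg' : HasDerivAt (deriv g) (deriv (deriv g) (Real.log r)) (Real.log r) :=
    ((hg.derivWithin (m := 1) le_rfl).differentiableAt one_ne_zero).hasDerivAt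
  have hsecond := ((hg'.comp r hlog).fun_mul (hasDerivAt_inv hr.ne')).deriv
  simp only [Function.comp_apply] at hsecond
  rw [hfirst.deriv_eq, hfirst.eq_of_nhds, hsecond]
  field_simp
  ring

lemma deriv_deriv_log_comp_nonneg {F : ℝ → ℝ} {t : ℝ} (hF : ContDiffAt ℝ 2 F t) (hpos : 0 < F t)
    (h : deriv F t ^ 2 ≤ F t * deriv (deriv F) t) :
    0 ≤ deriv (deriv fun t ↦ Real.log (F t)) t := by
  have hfirst : deriv (fun t ↦ Real.log (F t)) =ᶠ[𝓝 t] fun t ↦ deriv F t / F t := by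
    filter_upwards [hF.eventually (by simp), hF.continuousAt.eventually_ne hpos.ne'] with s hs hne
    exact deriv.log (hs.differentiableAt two_ne_zero) hne
  have hF' : HasDerivAt (deriv F) (deriv (deriv F) t) t :=
    ((hF.derivWithin (m := 1) le_rfl).differentiableAt one_ne_zero).hasDerivAt
  rw [hfirst.deriv_eq, (hF'.fun_div (hF.differentiableAt two_ne_zero).hasDerivAt hpos.ne').deriv]
  exact div_nonneg (by linarith) (sq_nonneg _)

end Calculus

section CoulombGas

variable {φ : ℂ → ℂ} {U : Set ℂ} {n : ℕ}

/-- The weight `∏_{μ<ν} |φ(z_μ) − φ(z_ν)|² ∏_μ |φ'(z_μ)|` of a configuration `z` of `n` charges,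
that is, the integrand of `Zn` before the charges are put on a circle. -/
noncomputable def coulombWeight (φ : ℂ → ℂ) (z : Fin n → ℂ) : ℝ :=
  (∏ p ∈ Finset.univ.filter (fun p : Fin n × Fin n ↦ p.1 < p.2), ‖φ (z p.1) - φ (z p.2)‖ ^ 2) *
    ∏ μ, ‖deriv φ (z μ)‖

lemma coulombWeight_nonneg (φ : ℂ → ℂ) (z : Fin n → ℂ) : 0 ≤ coulombWeight φ z := by
  unfold coulombWeight
  positivity

lemma coulombWeight_ne_zero (hφ : DifferentiableOn ℂ φ U) (hU : IsOpen U) (hinj : InjOn φ U)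
    {z : Fin n → ℂ} (hz : ∀ j, z j ∈ U) (hz' : z.Injective) : coulombWeight φ z ≠ 0 := by
  refine mul_ne_zero (Finset.prod_ne_zero_iff.2 fun p hp ↦ ?_) (Finset.prod_ne_zero_iff.2 fun j _ ↦
    norm_ne_zero_iff.2 (deriv_ne_zero_of_injOn hφ hU hinj (hz j)))
  refine pow_ne_zero 2 (norm_ne_zero_iff.2 (sub_ne_zero.2 fun heq ↦ ?_))
  exact (Finset.mem_filter.1 hp).2.ne (hz' (hinj (hz _) (hz _) heq))

lemma contDiffOn_coulombWeight (hφ : DifferentiableOn ℂ φ U) (hU : IsOpen U) (hinj : InjOn φ U) :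
    ContDiffOn ℝ ∞ (coulombWeight (n := n) φ) (univ.pi fun _ ↦ U) := by
  intro z hz
  have hana (j : Fin n) : AnalyticAt ℂ φ (z j) := hφ.analyticAt (hU.mem_nhds (hz j trivial))
  have hval (j : Fin n) : ContDiffAt ℝ ∞ (fun z : Fin n → ℂ ↦ φ (z j)) z :=
    ((hana j).contDiffAt.restrict_scalars ℝ).comp z (contDiff_apply ℝ ℂ j).contDiffAt
  have hderiv (j : Fin n) : ContDiffAt ℝ ∞ (fun z : Fin n → ℂ ↦ deriv φ (z j)) z :=
    ((hana j).deriv.contDiffAt.restrict_scalars ℝ).comp z (contDiff_apply ℝ ℂ j).contDiffAt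
  refine ContDiffAt.contDiffWithinAt (ContDiffAt.mul (contDiffAt_prod fun p _ ↦ ?_)
    (contDiffAt_prod fun j _ ↦ ?_))
  · exact ((hval p.1).sub (hval p.2)).norm_sq ℝ
  · exact (hderiv j).norm ℝ (deriv_ne_zero_of_injOn hφ hU hinj (hz j trivial))

lemma isNormSqAt_coulombWeight (hφ : DifferentiableOn ℂ φ U) (hU : IsOpen U) (hinj : InjOn φ U)
    {ζ : Fin n → ℂ → ℂ} {w : ℂ} (hζ : ∀ j, AnalyticAt ℂ (ζ j) w) (hmem : ∀ j, ζ j w ∈ U) :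
    IsNormSqAt (fun w ↦ coulombWeight φ fun j ↦ ζ j w) w := by
  have hana (j : Fin n) : AnalyticAt ℂ φ (ζ j w) := hφ.analyticAt (hU.mem_nhds (hmem j))
  have hpair (p : Fin n × Fin n) : IsNormSqAt (fun w ↦ ‖φ (ζ p.1 w) - φ (ζ p.2 w)‖ ^ 2) w :=
    isNormSqAt_norm_sq (((hana p.1).comp (hζ p.1)).sub ((hana p.2).comp (hζ p.2)))
  have hderiv (j : Fin n) : IsNormSqAt (fun w ↦ ‖deriv φ (ζ j w)‖) w :=
    isNormSqAt_norm ((hana j).deriv.comp (hζ j)) (deriv_ne_zero_of_injOn hφ hU hinj (hmem j))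
  exact (isNormSqAt_prod fun p _ ↦ hpair p).mul (isNormSqAt_prod fun j _ ↦ hderiv j)

/-- The integrand of `Zn φ n r / (2π) ^ n` at the angles `p.2`, as a function of the logarithmic
coordinate `p.1 = log r`. The factor `r ^ (-n(n-1))` is written as the squared modulus of a function
holomorphic in `p.1`, so that the density remains of this form for complex `p.1`. -/
noncomputable def gasDensity (φ : ℂ → ℂ) (n : ℕ) (p : ℂ × (Fin n → ℝ)) : ℝ :=
  1 / (n.factorial * (2 * Real.pi) ^ n) * ‖Complex.exp (-((n * (n - 1) : ℕ) / 2 : ℂ) * p.1)‖ ^ 2 *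
    coulombWeight φ fun j ↦ Complex.exp (p.1 + Complex.I * p.2 j)

/-- The box `[-π, π]^n` of angles over which `Zn` integrates. -/
def angleBox (n : ℕ) : Set (Fin n → ℝ) :=
  univ.pi fun _ ↦ Icc (-Real.pi) Real.pi

lemma isCompact_angleBox : IsCompact (angleBox n) := isCompact_univ_pi fun _ ↦ isCompact_Icc

/-- The partition function in logarithmic coordinates: `gasIntegral φ n (log r)` is
`Zn φ n r / (2π) ^ n`, and the complex argument `w` stands for `r = exp w`. -/
noncomputable def gasIntegral (φ : ℂ → ℂ) (n : ℕ) (w : ℂ) : ℝ :=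
  ∫ θ in angleBox n, gasDensity φ n (w, θ)

lemma Zn_div_eq_gasIntegral (φ : ℂ → ℂ) (n : ℕ) {r : ℝ} (hr : 0 < r) :
    Zn φ n r / (2 * Real.pi) ^ n = gasIntegral φ n (Real.log r) := by
  have hexp (t : ℝ) :
      Complex.exp (Real.log r + Complex.I * t) = r * Complex.exp (Complex.I * t) := by
    rw [Complex.exp_add, ← Complex.ofReal_exp, Real.exp_log hr]
  have hpow : ‖Complex.exp (-((n * (n - 1) : ℕ) / 2 : ℂ) * Real.log r)‖ ^ 2 =
      (r ^ (n * (n - 1)))⁻¹ := by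
    rw [Complex.norm_exp, ← Real.exp_nat_mul, Complex.re_mul_ofReal, ← Real.exp_log (pow_pos hr _),
      ← Real.exp_neg, Real.log_pow]
    simp only [Nat.cast_ofNat, Nat.cast_mul, Complex.neg_re, Complex.div_ofNat_re, Complex.mul_re,
      Complex.natCast_re, Complex.natCast_im, mul_zero, sub_zero]
    ring_nf
  simp only [gasIntegral, gasDensity, hexp, hpow, integral_const_mul]
  change 1 / (n.factorial * r ^ (n * (n - 1))) * (∫ θ in angleBox n,
    coulombWeight φ fun j ↦ r * Complex.exp (Complex.I * θ j)) / (2 * Real.pi) ^ n = _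
  field_simp

/- The integrand sees the angles only through the points `exp (I * θ j)`, so it lives on a torus,
and adding `s * I` to `w` translates that torus. -/
lemma setIntegral_coulombWeight_add_mul_I {w : ℂ}
    (hw : ∀ t : ℝ, Complex.exp (w + Complex.I * t) ∈ U)
    (hcont : ContinuousOn (coulombWeight (n := n) φ) (univ.pi fun _ ↦ U)) (s : ℝ) :
    ∫ θ in angleBox n, coulombWeight φ (fun j ↦ Complex.exp (w + s * Complex.I + Complex.I * θ j)) =
      ∫ θ in angleBox n, coulombWeight φ (fun j ↦ Complex.exp (w + Complex.I * θ j)) := by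
  have : Fact (0 < 2 * Real.pi) := ⟨Real.two_pi_pos⟩
  let point (x : AddCircle (2 * Real.pi)) : ℂ := Complex.exp w * x.toCircle
  have hpoint (t : ℝ) : point t = Complex.exp (w + Complex.I * t) := by
    simp [point, AddCircle.toCircle_apply_mk, Circle.coe_exp, Complex.exp_add, mul_comm]
  have hmem (x : AddCircle (2 * Real.pi)) : point x ∈ U := by
    induction x using QuotientAddGroup.induction_on with
    | H t => exact (hpoint t).symm ▸ hw t
  have hpoint_cont : Continuous point := by fun_prop
  have hg : Continuous fun x : Fin n → AddCircle (2 * Real.pi) ↦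
      coulombWeight φ fun j ↦ point (x j) :=
    hcont.comp_continuous (by fun_prop) fun x j _ ↦ hmem (x j)
  have hrotate := setIntegral_pi_addCircle_add_left hg.aestronglyMeasurable (-Real.pi) fun _ ↦ s
  rw [show -Real.pi + 2 * Real.pi = Real.pi by ring] at hrotate
  simp only [← AddCircle.coe_add, hpoint] at hrotate
  have hadd (t : ℝ) : w + s * Complex.I + Complex.I * t = w + Complex.I * (s + t : ℝ) := by
    push_cast
    ring
  simpa only [hadd, angleBox] using hrotate

lemma exists_injective_exp_mem_interior_angleBox (n : ℕ) (w : ℂ) : ∃ θ ∈ interior (angleBox n),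
    Function.Injective fun j ↦ Complex.exp (w + Complex.I * θ j) := by
  have hθ (j : Fin n) : 0 < ((j : ℝ) + 1)⁻¹ ∧ ((j : ℝ) + 1)⁻¹ < Real.pi :=
    ⟨by positivity, (inv_le_one_of_one_le₀ (by simp)).trans_lt (by linarith [Real.pi_gt_three])⟩
  refine ⟨fun j ↦ ((j : ℝ) + 1)⁻¹, ?_, fun i j hij ↦ ?_⟩
  · rw [angleBox, interior_pi_set finite_univ]
    intro j _
    rw [interior_Icc]
    exact ⟨by linarith [hθ j, Real.pi_pos], (hθ j).2⟩
  · have him (j : Fin n) : (Complex.I * (((j : ℝ) + 1)⁻¹ : ℝ)).im = ((j : ℝ) + 1)⁻¹ := by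
      rw [Complex.I_mul_im, Complex.ofReal_re]
    simp only [Complex.exp_add] at hij
    have hij' := congrArg Complex.im (Complex.exp_inj_of_neg_pi_lt_of_le_pi
      (by rw [him]; linarith [hθ i, Real.pi_pos]) (by rw [him]; exact (hθ i).2.le)
      (by rw [him]; linarith [hθ j, Real.pi_pos]) (by rw [him]; exact (hθ j).2.le)
      (mul_left_cancel₀ (Complex.exp_ne_zero w) hij))
    rw [him, him] at hij'
    exact Fin.ext (by exact_mod_cast add_right_cancel (inv_injective hij'))

section Annulus

variable {R : Set ℝ} (hR : IsOpen R) (hφ : DifferentiableOn ℂ φ (norm ⁻¹' R))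
  (hinj : InjOn φ (norm ⁻¹' R))

lemma exp_add_I_mul_mem_annulus {w : ℂ} (hw : Real.exp w.re ∈ R) (t : ℝ) :
    Complex.exp (w + Complex.I * t) ∈ norm ⁻¹' R := by
  simpa [Complex.norm_exp] using hw

include hR hφ hinj

lemma contDiffOn_gasDensity :
    ContDiffOn ℝ ∞ (gasDensity φ n) (((fun w : ℂ ↦ Real.exp w.re) ⁻¹' R) ×ˢ univ) := by
  have hcast : ContDiff ℝ ∞ ((↑) : ℝ → ℂ) := Complex.ofRealCLM.contDiff
  have hpoints : ContDiff ℝ ∞ fun (p : ℂ × (Fin n → ℝ)) j ↦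
      Complex.exp (p.1 + Complex.I * p.2 j) := by fun_prop
  refine ContDiffOn.mul ?_ ((contDiffOn_coulombWeight hφ (hR.preimage continuous_norm) hinj).comp
    hpoints.contDiffOn fun p hp j _ ↦ exp_add_I_mul_mem_annulus hp.1 _)
  exact contDiffOn_const.mul (ContDiff.norm_sq ℝ (by fun_prop)).contDiffOn

lemma isNormSqAt_gasDensity {w : ℂ} (hw : Real.exp w.re ∈ R) (θ : Fin n → ℝ) :
    IsNormSqAt (fun w ↦ gasDensity φ n (w, θ)) w := by
  have hfactor : AnalyticAt ℂ
      (fun w ↦ Complex.exp (-((n * (n - 1) : ℕ) / 2 : ℂ) * w)) w := by fun_prop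
  have hpoint (j : Fin n) : AnalyticAt ℂ (fun w ↦ Complex.exp (w + Complex.I * θ j)) w := by
    fun_prop
  exact ((isNormSqAt_const (by positivity)).mul (isNormSqAt_norm_sq hfactor)).mul
    (isNormSqAt_coulombWeight hφ (hR.preimage continuous_norm) hinj hpoint
      fun j ↦ exp_add_I_mul_mem_annulus hw _)

lemma gasIntegral_pos {w : ℂ} (hw : Real.exp w.re ∈ R) : 0 < gasIntegral φ n w := by
  obtain ⟨θ, hθ, hinjθ⟩ := exists_injective_exp_mem_interior_angleBox n w
  have hsmooth := contDiffOn_gasDensity (n := n) hR hφ hinj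
  have hcont : Continuous fun θ ↦ gasDensity φ n (w, θ) :=
    hsmooth.continuousOn.comp_continuous (by fun_prop) fun _ ↦ ⟨hw, trivial⟩
  refine setIntegral_pos_of_continuous_of_mem_interior isCompact_angleBox hcont
    (fun θ ↦ (isNormSqAt_gasDensity hR hφ hinj hw θ).nonneg) hθ (mul_ne_zero ?_ ?_)
  · have := Complex.exp_ne_zero (-((n * (n - 1) : ℕ) / 2 : ℂ) * w)
    positivity
  · exact coulombWeight_ne_zero hφ (hR.preimage continuous_norm) hinj
      (fun j ↦ exp_add_I_mul_mem_annulus hw _) hinjθ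

lemma gasIntegral_add_mul_I {w : ℂ} (hw : Real.exp w.re ∈ R) (s : ℝ) :
    gasIntegral φ n (w + s * Complex.I) = gasIntegral φ n w := by
  simp only [gasIntegral, gasDensity, integral_const_mul]
  rw [setIntegral_coulombWeight_add_mul_I (exp_add_I_mul_mem_annulus hw)
    (contDiffOn_coulombWeight hφ (hR.preimage continuous_norm) hinj).continuousOn]
  simp [Complex.norm_exp]

lemma contDiffOn_gasIntegral_ofReal :
    ContDiffOn ℝ ∞ (fun t : ℝ ↦ gasIntegral φ n t) (Real.exp ⁻¹' R) := by
  have hline := contDiffOn_comp_line (contDiffOn_gasDensity (n := n) hR hφ hinj) 0 1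
  simp only [zero_add, mul_one] at hline
  exact contDiffOn_setIntegral isCompact_angleBox (hR.preimage Real.continuous_exp) hline

lemma sq_deriv_gasIntegral_le {t : ℝ} (ht : Real.exp t ∈ R) :
    deriv (fun t : ℝ ↦ gasIntegral φ n t) t ^ 2 ≤
      gasIntegral φ n t * deriv (deriv fun t : ℝ ↦ gasIntegral φ n t) t := by
  have hstrip : IsOpen ((fun w : ℂ ↦ Real.exp w.re) ⁻¹' R) := hR.preimage (by fun_prop)
  exact sq_deriv_le_of_vertical_invariant (gasIntegral_add_mul_I hR hφ hinj ht)
    (sq_deriv_setIntegral_le isCompact_angleBox hstrip (contDiffOn_gasDensity hR hφ hinj) ht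
      fun θ _ ↦ isNormSqAt_gasDensity hR hφ hinj ht θ)

end Annulus

end CoulombGas

theorem stmt11_general {φ : ℂ → ℂ} {R : Set ℝ} (hR : IsOpen R) (hR₀ : R ⊆ Ioi 0)
    (hφ : DifferentiableOn ℂ φ (norm ⁻¹' R)) (hinj : InjOn φ (norm ⁻¹' R)) (n : ℕ) :
    ContDiffOn ℝ ∞ (En φ n) R ∧
      ∀ r ∈ R, 0 ≤ r * deriv (deriv (En φ n)) r + deriv (En φ n) r := by
  set F : ℝ → ℝ := fun t ↦ gasIntegral φ n t
  have hEn : EqOn (En φ n) (fun r ↦ Real.log (F (Real.log r))) R := fun r hr ↦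
    congrArg Real.log (Zn_div_eq_gasIntegral φ n (hR₀ hr))
  have hmaps : MapsTo Real.log R (Real.exp ⁻¹' R) := fun r hr ↦ by
    rwa [mem_preimage, Real.exp_log (hR₀ hr)]
  have hF : ContDiffOn ℝ ∞ F (Real.exp ⁻¹' R) := contDiffOn_gasIntegral_ofReal hR hφ hinj
  have hpos (t : ℝ) (ht : Real.exp t ∈ R) : 0 < F t := gasIntegral_pos hR hφ hinj ht
  have hlogF : ContDiffOn ℝ ∞ (fun t ↦ Real.log (F t)) (Real.exp ⁻¹' R) :=
    hF.log fun t ht ↦ (hpos t ht).ne'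
  have hlog : ContDiffOn ℝ ∞ Real.log R := contDiffOn_id.log fun r hr ↦ (hR₀ hr).ne'
  refine ⟨(hlogF.comp hlog hmaps).congr hEn, fun r hr ↦ ?_⟩
  have hnhds : Real.exp ⁻¹' R ∈ 𝓝 (Real.log r) :=
    (hR.preimage Real.continuous_exp).mem_nhds (hmaps hr)
  have hEn_nhds := hEn.eventuallyEq_of_mem (hR.mem_nhds hr)
  rw [hEn_nhds.deriv.deriv_eq, hEn_nhds.deriv_eq, mul_deriv_deriv_comp_log_add_deriv (hR₀ hr)
    (contDiffAt_infty.1 (hlogF.contDiffAt hnhds) 2)]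
  exact div_nonneg (deriv_deriv_log_comp_nonneg (contDiffAt_infty.1 (hF.contDiffAt hnhds) 2)
    (hpos _ (hmaps hr)) (sq_deriv_gasIntegral_le hR hφ hinj (hmaps hr))) (hR₀ hr).le

/-- For a univalent `φ` on the exterior disk with hydrodynamic
normalization, `E_n` is twice continuously differentiable on `(1, ∞)` and satisfies
`r E_n''(r) + E_n'(r) ≥ 0` for all `r > 1`. -/
theorem stmt11 (φ : ℂ → ℂ) (φ₀ : ℂ) (c : ℕ → ℂ)
    (hφ : DifferentiableOn ℂ φ {z : ℂ | 1 < ‖z‖})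
    (hinj : Set.InjOn φ {z : ℂ | 1 < ‖z‖})
    (hLaurent : ∀ z : ℂ, 1 < ‖z‖ →
      Summable (fun k : ℕ => ‖c k * z ^ (-(k : ℤ) - 1)‖) ∧
      φ z = z + φ₀ + ∑' k : ℕ, c k * z ^ (-(k : ℤ) - 1))
    (n : ℕ) (hn : 1 ≤ n) :
    ContDiffOn ℝ 2 (En φ n) (Set.Ioi 1) ∧
    ∀ r : ℝ, 1 < r → 0 ≤ r * deriv (deriv (En φ n)) r + deriv (En φ n) r := by
  have h := stmt11_general isOpen_Ioi (Ioi_subset_Ioi zero_le_one) hφ hinj n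
  exact ⟨contDiffOn_infty.1 h.1 2, h.2⟩
end

section
/- Let φ be holomorphic and injective on the exterior disk Δ = {z ∈ ℂ : |z| > 1}, with Laurent expansion φ(z) = z + φ₀ + ∑_{k≥1} φ_{-k} z^{-k} at infinity, and let n ≥ 1. Then E_n(r) → 0 as r → ∞. -/
open MeasureTheory Filter

/-!
As `z → ∞` the Laurent expansion gives `φ z ~ z`, and Cauchy's estimate on the disk of radius
`‖z‖ / 2` about `z` turns this into `φ' z → 1`. The rescaled points `φ (r exp (iθ)) / r` therefore
stay bounded and converge to `exp (iθ)`, so `Zn φ n r` converges, by dominated convergence, to the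
partition function of the unit circle. There the integrand is the squared modulus of a
Vandermonde determinant, and Andréief's identity evaluates its integral as `n!` times the Gram
determinant of the orthogonal functions `1, exp (iθ), …, exp (i(n-1)θ)`, which is `(2π) ^ n`.
-/

section

open Asymptotics Bornology Topology

theorem tendsto_deriv_cobounded_of_isLittleO_id {E : Type*} [NormedAddCommGroup E]
    [NormedSpace ℂ E] {f : ℂ → E} (hf : ∀ᶠ z in cobounded ℂ, DifferentiableAt ℂ f z)
    (ho : f =o[cobounded ℂ] (id : ℂ → ℂ)) : Tendsto (deriv f) (cobounded ℂ) (𝓝 0) := by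
  refine (isLittleO_one_iff ℝ).1 (isLittleO_iff.2 fun ε hε => ?_)
  obtain ⟨R, -, hR⟩ := hasBasis_cobounded_norm.eventually_iff.1
    (hf.and (ho.bound (by positivity : 0 < ε / 3)))
  filter_upwards [tendsto_norm_cobounded_atTop.eventually_gt_atTop 0,
    tendsto_norm_cobounded_atTop.eventually_ge_atTop (2 * R)] with z hz hzR
  have norm_mem {w : ℂ} (hw : w ∈ Metric.closedBall z (‖z‖ / 2)) :
      R ≤ ‖w‖ ∧ ‖w‖ ≤ 3 / 2 * ‖z‖ := by
    have hwz := abs_le.1 ((abs_norm_sub_norm_le w z).trans (mem_closedBall_iff_norm.1 hw))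
    constructor <;> linarith
  have cauchy : ‖deriv f z‖ ≤ ε / 3 * (3 / 2 * ‖z‖) / (‖z‖ / 2) := by
    refine Complex.norm_deriv_le_of_forall_mem_sphere_norm_le (by positivity)
      (DifferentiableOn.diffContOnCl fun w hw => ?_) fun w hw => ?_
    · have hw' := norm_mem (Metric.closure_ball_subset_closedBall hw)
      exact (hR hw'.1).1.differentiableWithinAt
    · have hw' := norm_mem (Metric.sphere_subset_closedBall hw)
      exact (hR hw'.1).2.trans (mul_le_mul_of_nonneg_left hw'.2 (by positivity))
  calc ‖deriv f z‖ ≤ ε / 3 * (3 / 2 * ‖z‖) / (‖z‖ / 2) := cauchy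
    _ = ε * ‖(1 : ℝ)‖ := by rw [norm_one]; field_simp

theorem tendsto_deriv_of_isEquivalent_id {φ : ℂ → ℂ}
    (hφ : ∀ᶠ z in cobounded ℂ, DifferentiableAt ℂ φ z) (hid : φ ~[cobounded ℂ] id) :
    Tendsto (deriv φ) (cobounded ℂ) (𝓝 1) := by
  have h := tendsto_deriv_cobounded_of_isLittleO_id
    (hφ.mono fun z hz => hz.sub differentiableAt_id) hid.isLittleO
  rw [← tendsto_sub_nhds_zero_iff]
  refine h.congr' (hφ.mono fun z hz => ?_)
  rw [deriv_sub hz differentiableAt_id, deriv_id]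

theorem isBigO_one_tsum_mul_zpow {𝕜 : Type*} [NormedField 𝕜] {c : ℕ → 𝕜} {z₀ : 𝕜} (hz₀ : z₀ ≠ 0)
    (hc : Summable fun k => ‖c k * z₀ ^ (-(k : ℤ) - 1)‖) :
    (fun z => ∑' k, c k * z ^ (-(k : ℤ) - 1)) =O[cobounded 𝕜] (fun _ => (1 : ℝ)) := by
  refine IsBigO.of_bound (∑' k, ‖c k * z₀ ^ (-(k : ℤ) - 1)‖) ?_
  filter_upwards [tendsto_norm_cobounded_atTop.eventually_ge_atTop ‖z₀‖] with z hz
  rw [norm_one, mul_one]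
  refine tsum_of_norm_bounded hc.hasSum fun k => ?_
  simp only [norm_mul, norm_zpow]
  gcongr ?_ * ?_
  rw [show -(k : ℤ) - 1 = -((k + 1 : ℕ) : ℤ) by push_cast; ring, zpow_neg,
    zpow_neg, zpow_natCast, zpow_natCast]
  have : 0 < ‖z₀‖ := norm_pos_iff.2 hz₀
  gcongr

theorem isEquivalent_id_of_laurent {φ : ℂ → ℂ} {φ₀ z₀ : ℂ} {c : ℕ → ℂ} (hz₀ : z₀ ≠ 0)
    (hc : Summable fun k : ℕ => ‖c k * z₀ ^ (-(k : ℤ) - 1)‖)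
    (hφ : ∀ᶠ z in cobounded ℂ, φ z = z + φ₀ + ∑' k : ℕ, c k * z ^ (-(k : ℤ) - 1)) :
    φ ~[cobounded ℂ] id := by
  have bounded : (fun z => φ₀ + ∑' k : ℕ, c k * z ^ (-(k : ℤ) - 1)) =O[cobounded ℂ]
      (fun _ => (1 : ℝ)) :=
    (isBigO_const_const φ₀ one_ne_zero _).add (isBigO_one_tsum_mul_zpow hz₀ hc)
  refine (bounded.trans_isLittleO (isLittleO_const_id_cobounded (1 : ℝ))).congr' ?_ .rfl
  filter_upwards [hφ] with z hz
  simp only [Pi.sub_apply, id_eq, hz]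
  ring

theorem eventually_forall_circleMap {p : ℂ → Prop} (h : ∀ᶠ z in cobounded ℂ, p z) :
    ∀ᶠ r : ℝ in atTop, ∀ θ, p (circleMap 0 r θ) := by
  rw [← comap_norm_atTop, eventually_comap] at h
  filter_upwards [h, eventually_ge_atTop 0] with r hr hr0 θ
  exact hr _ (by rw [norm_circleMap_zero, abs_of_nonneg hr0])

theorem tendsto_circleMap_cobounded (θ : ℝ) :
    Tendsto (fun r => circleMap 0 r θ) atTop (cobounded ℂ) :=
  tendsto_norm_atTop_iff_cobounded.1 <| by
    simpa only [norm_circleMap_zero] using tendsto_abs_atTop_atTop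

theorem tendsto_div_circleMap {φ : ℂ → ℂ} (hid : φ ~[cobounded ℂ] id) (θ : ℝ) :
    Tendsto (fun r : ℝ => φ (circleMap 0 r θ) / r) atTop (𝓝 (circleMap 0 1 θ)) := by
  have hratio : Tendsto (φ / id) (cobounded ℂ) (𝓝 1) :=
    (isEquivalent_iff_tendsto_one (eventually_ne_cobounded 0)).1 hid
  have h := (hratio.comp (tendsto_circleMap_cobounded θ)).mul_const (circleMap 0 1 θ)
  rw [one_mul] at h
  refine h.congr' ((eventually_ne_atTop 0).mono fun r hr => ?_)
  have hz : circleMap 0 r θ = r * circleMap 0 1 θ := by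
    simp only [circleMap_zero, Complex.ofReal_one, one_mul]
  rw [Function.comp_apply, Pi.div_apply, id, div_mul_eq_mul_div, div_eq_div_iff
    (circleMap_ne_center hr) (Complex.ofReal_ne_zero.2 hr), mul_assoc, mul_comm _ (r : ℂ), ← hz]

theorem tendsto_integral_comp_of_continuous {α β E F : Type*} [MeasurableSpace α]
    {μ : Measure α} [IsFiniteMeasure μ] {l : Filter β} [l.IsCountablyGenerated]
    [NormedAddCommGroup E] [ProperSpace E] [NormedAddCommGroup F] [NormedSpace ℝ F]
    {G : E → F} (hG : Continuous G) {u : β → α → E} {v : α → E} {C : ℝ}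
    (hmeas : ∀ᶠ b in l, AEStronglyMeasurable (u b) μ) (hbound : ∀ᶠ b in l, ∀ a, ‖u b a‖ ≤ C)
    (hlim : ∀ a, Tendsto (u · a) l (𝓝 (v a))) :
    Tendsto (fun b => ∫ a, G (u b a) ∂μ) l (𝓝 (∫ a, G (v a) ∂μ)) := by
  obtain ⟨K, hK⟩ :=
    (isCompact_closedBall (0 : E) C).exists_bound_of_continuousOn hG.continuousOn
  refine tendsto_integral_filter_of_dominated_convergence (fun _ => K)
    (hmeas.mono fun b hb => hG.comp_aestronglyMeasurable hb)
    (hbound.mono fun b hb => .of_forall fun a => hK _ (mem_closedBall_zero_iff.2 (hb a)))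
    (integrable_const K) (.of_forall fun a => (hG.tendsto _).comp (hlim a))

end

section

open Asymptotics Bornology Matrix Topology
open scoped ComplexConjugate Real

theorem integral_det_mul_det {ι X 𝕜 : Type*} [Fintype ι] [DecidableEq ι] [MeasurableSpace X]
    {μ : Measure X} [SigmaFinite μ] [RCLike 𝕜] {f g : ι → X → 𝕜}
    (hfg : ∀ i j, Integrable (fun x => f i x * g j x) μ) :
    ∫ x : ι → X, (of fun i j => f j (x i)).det * (of fun i j => g j (x i)).det
        ∂(Measure.pi fun _ => μ) =
      (Fintype.card ι).factorial * (of fun i j => ∫ x, f i x * g j x ∂μ).det := by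
  have expand (x : ι → X) :
      (of fun i j => f j (x i)).det * (of fun i j => g j (x i)).det =
        ∑ σ : Equiv.Perm ι, ∑ τ : Equiv.Perm ι, ((σ.sign : ℤ) : 𝕜) * ((τ.sign : ℤ) : 𝕜) *
          ∏ i, f (σ i) (x i) * g (τ i) (x i) := by
    rw [← det_transpose, det_apply', ← det_transpose (of fun i j => g j (x i)), det_apply',
      Finset.sum_mul_sum]
    simp only [transpose_apply, of_apply, Finset.prod_mul_distrib, mul_mul_mul_comm]
  have integrable (σ τ : Equiv.Perm ι) : Integrable (fun x : ι → X =>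
      ((σ.sign : ℤ) : 𝕜) * ((τ.sign : ℤ) : 𝕜) * ∏ i, f (σ i) (x i) * g (τ i) (x i))
      (Measure.pi fun _ => μ) :=
    (Integrable.fintype_prod fun i => hfg (σ i) (τ i)).const_mul _
  have sum_perm (σ : Equiv.Perm ι) :
      ∑ τ : Equiv.Perm ι, ((σ.sign : ℤ) : 𝕜) * ((τ.sign : ℤ) : 𝕜) *
          ∏ i, ∫ x, f (σ i) x * g (τ i) x ∂μ =
        (of fun i j => ∫ x, f i x * g j x ∂μ).det := by
    have sign_sq : ((σ.sign : ℤ) : 𝕜) * ((σ.sign : ℤ) : 𝕜) = 1 := by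
      rw [← Int.cast_mul, Int.units_coe_mul_self, Int.cast_one]
    rw [← one_mul (det _), ← sign_sq, mul_assoc, ← det_permute, ← det_transpose, det_apply',
      Finset.mul_sum]
    simp only [transpose_apply, submatrix_apply, of_apply, id_eq, mul_assoc]
  simp_rw [expand]
  rw [integral_finsetSum _ fun σ _ => integrable_finsetSum _ fun τ _ => integrable σ τ]
  simp_rw [integral_finsetSum _ fun τ _ => integrable _ τ, integral_const_mul,
    fun σ τ : Equiv.Perm ι => integral_fintype_prod_eq_prod (μ := fun _ => μ)
      fun i x => f (σ i) x * g (τ i) x, sum_perm]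
  rw [Finset.sum_const, Finset.card_univ, Fintype.card_perm, nsmul_eq_mul]

theorem integral_circleMap_zpow (r : ℝ) (m : ℤ) :
    ∫ θ in -π..π, circleMap 0 r θ ^ m = if m = 0 then (2 * π : ℂ) else 0 := by
  split_ifs with hm
  · simp [hm, two_mul]
  · have hmI : m * Complex.I ≠ 0 := mul_ne_zero (Int.cast_ne_zero.2 hm) Complex.I_ne_zero
    have hexp (θ : ℝ) : circleMap 0 r θ ^ m = r ^ m * Complex.exp (m * Complex.I * θ) := by
      rw [circleMap_zero_zpow, circleMap_zero]
      push_cast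
      ring_nf
    have hperiod : Complex.exp (m * Complex.I * π) = Complex.exp (m * Complex.I * (-π : ℝ)) :=
      Complex.exp_eq_exp_iff_exists_int.2 ⟨m, by push_cast; ring⟩
    simp_rw [hexp]
    rw [intervalIntegral.integral_const_mul, integral_exp_mul_complex hmI, hperiod, sub_self,
      zero_div, mul_zero]

/-- Lebesgue measure on the angles `[-π, π]`, not normalized: its total mass is `2π`. The integral
in `Zn φ n` is taken against its `n`-fold product. -/
noncomputable abbrev angleMeasure : Measure ℝ := volume.restrict (Set.Icc (-π) π)

theorem integral_circleMap_pow_mul_conj_pow (a b : ℕ) :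
    ∫ θ, circleMap 0 1 θ ^ a * conj (circleMap 0 1 θ ^ b) ∂angleMeasure =
      if a = b then (2 * π : ℂ) else 0 := by
  have hzpow (θ : ℝ) :
      circleMap 0 1 θ ^ a * conj (circleMap 0 1 θ ^ b) = circleMap 0 1 θ ^ (a - b : ℤ) := by
    rw [zpow_sub₀ (circleMap_ne_center one_ne_zero), zpow_natCast, zpow_natCast, div_eq_mul_inv,
      map_pow, ← inv_pow, Complex.inv_eq_conj (by simp)]
  simp_rw [hzpow]
  rw [integral_Icc_eq_integral_Ioc,
    ← intervalIntegral.integral_of_le (neg_le_self Real.pi_nonneg), integral_circleMap_zpow]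
  simp only [sub_eq_zero, Nat.cast_inj]

theorem prod_filter_lt_eq_prod_prod_Ioi {ι M : Type*} [Fintype ι] [LinearOrder ι]
    [LocallyFiniteOrderTop ι] [CommMonoid M] (f : ι → ι → M) :
    ∏ p : ι × ι with p.1 < p.2, f p.1 p.2 = ∏ i, ∏ j ∈ Finset.Ioi i, f i j := by
  rw [Finset.prod_filter, Fintype.prod_prod_type]
  simp_rw [← Finset.filter_lt_eq_Ioi, Finset.prod_filter]

/-- The unnormalized density of the Coulomb gas at `β = 2` on a parametrized curve, as a function of
a pair `q`: the particles sit at the points `q.1 μ`, where the parametrization has speed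
`‖q.2 μ‖`. -/
noncomputable def coulombDensity {n : ℕ} (q : (Fin n → ℂ) × (Fin n → ℂ)) : ℝ :=
  (∏ p : Fin n × Fin n with p.1 < p.2, ‖q.1 p.1 - q.1 p.2‖ ^ 2) * ∏ μ, ‖q.2 μ‖

theorem continuous_coulombDensity {n : ℕ} : Continuous (coulombDensity (n := n)) := by
  unfold coulombDensity
  fun_prop

theorem coulombDensity_div {n : ℕ} (x v : Fin n → ℂ) (a : ℂ) :
    coulombDensity (fun μ => x μ / a, v) = (‖a‖ ^ (n * (n - 1)))⁻¹ * coulombDensity (x, v) := by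
  have hpow : ∏ p : Fin n × Fin n with p.1 < p.2, ‖a‖ ^ 2 = ‖a‖ ^ (n * (n - 1)) := by
    rw [prod_filter_lt_eq_prod_prod_Ioi fun _ _ => ‖a‖ ^ 2]
    simp_rw [pow_two]
    rw [Finset.prod_prod_Ioi_mul_eq_prod_prod_off_diag fun _ _ => ‖a‖]
    simp [Finset.card_compl, ← pow_mul, mul_comm]
  simp only [coulombDensity, ← sub_div, norm_div, div_pow, Finset.prod_div_distrib, hpow]
  ring

theorem coulombDensity_one {n : ℕ} (x : Fin n → ℂ) :
    (coulombDensity (x, 1) : ℂ) =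
      (of fun i (j : Fin n) => x i ^ (j : ℕ)).det *
        (of fun i (j : Fin n) => conj (x i ^ (j : ℕ))).det := by
  have hdet : ‖(vandermonde x).det‖ ^ 2 = coulombDensity (x, 1) := by
    simp only [det_vandermonde, norm_prod, ← Finset.prod_pow, coulombDensity, Pi.one_apply,
      norm_one, Finset.prod_const_one, mul_one,
      prod_filter_lt_eq_prod_prod_Ioi fun i j => ‖x i - x j‖ ^ 2, norm_sub_rev]
  have hconj : (of fun i (j : Fin n) => conj (x i ^ (j : ℕ))).det = conj (vandermonde x).det :=
    (RingHom.map_det _ _).symm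
  rw [← hdet, hconj, Complex.ofReal_pow, ← Complex.mul_conj']
  rfl

theorem integral_coulombDensity_circleMap (n : ℕ) :
    ∫ θ, coulombDensity (fun μ => circleMap 0 1 (θ μ), 1)
        ∂(Measure.pi fun _ : Fin n => angleMeasure) = n.factorial * (2 * π) ^ n := by
  have integrable (a b : Fin n) : Integrable (fun θ =>
      circleMap 0 1 θ ^ (a : ℕ) * conj (circleMap 0 1 θ ^ (b : ℕ))) angleMeasure :=
    ContinuousOn.integrableOn_compact isCompact_Icc (by fun_prop)
  have gram : (of fun i j : Fin n => ∫ θ, circleMap 0 1 θ ^ (i : ℕ) *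
      conj (circleMap 0 1 θ ^ (j : ℕ)) ∂angleMeasure) = diagonal fun _ => (2 * π : ℂ) := by
    ext i j
    simp only [of_apply, integral_circleMap_pow_mul_conj_pow, diagonal_apply, Fin.ext_iff]
  apply Complex.ofReal_injective
  rw [← integral_complex_ofReal]
  simp_rw [coulombDensity_one]
  rw [integral_det_mul_det integrable, gram, det_diagonal]
  simp

/-- The positions of `n` particles with angles `θ μ` on the rescaled curve `γ_r`, the image of the
unit circle under `φ_r z = φ (r z) / r`, paired with the values of `φ_r'` at the angles `θ μ`; the
latter agree with the velocities of `θ ↦ φ_r (exp (iθ))` up to a unimodular factor. -/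
noncomputable def curveConfiguration (φ : ℂ → ℂ) {n : ℕ} (r : ℝ) (θ : Fin n → ℝ) :
    (Fin n → ℂ) × (Fin n → ℂ) :=
  (fun μ => φ (circleMap 0 r (θ μ)) / r, fun μ => deriv φ (circleMap 0 r (θ μ)))

theorem Zn_eq_integral_coulombDensity (φ : ℂ → ℂ) (n : ℕ) (r : ℝ) :
    Zn φ n r = (n.factorial : ℝ)⁻¹ *
      ∫ θ, coulombDensity (curveConfiguration φ r θ)
        ∂(Measure.pi fun _ : Fin n => angleMeasure) := by
  simp_rw [curveConfiguration, coulombDensity_div, integral_const_mul]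
  rw [Zn, one_div, mul_inv, mul_assoc, volume_pi, Measure.restrict_pi_pi, Complex.norm_real,
    Real.norm_eq_abs, (Nat.even_mul_pred_self n).pow_abs]
  simp only [circleMap_zero, coulombDensity, mul_comm Complex.I]

theorem eventually_measurable_curveConfiguration {φ : ℂ → ℂ}
    (hφ : ∀ᶠ z in cobounded ℂ, DifferentiableAt ℂ φ z) (n : ℕ) :
    ∀ᶠ r in atTop, Measurable (curveConfiguration φ (n := n) r) := by
  filter_upwards [eventually_forall_circleMap hφ] with r hr
  have hcont : Continuous fun θ => φ (circleMap 0 r θ) := continuous_iff_continuousAt.2 fun θ =>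
    (hr θ).continuousAt.comp (continuous_circleMap 0 r).continuousAt
  have hderiv : Measurable fun θ => deriv φ (circleMap 0 r θ) :=
    (measurable_deriv φ).comp (measurable_circleMap 0 r)
  exact (measurable_pi_lambda _ fun μ =>
      (hcont.measurable.comp (measurable_pi_apply μ)).div_const _).prodMk
    (measurable_pi_lambda _ fun μ => hderiv.comp (measurable_pi_apply μ))

theorem eventually_norm_curveConfiguration_le {φ : ℂ → ℂ}
    (hφ : ∀ᶠ z in cobounded ℂ, DifferentiableAt ℂ φ z) (hid : φ ~[cobounded ℂ] id) (n : ℕ) :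
    ∀ᶠ r in atTop, ∀ θ : Fin n → ℝ, ‖curveConfiguration φ r θ‖ ≤ 2 := by
  have hderiv : ∀ᶠ z in cobounded ℂ, ‖deriv φ z‖ ≤ 2 :=
    (tendsto_deriv_of_isEquivalent_id hφ hid).norm.eventually_le_const (by norm_num)
  filter_upwards [eventually_forall_circleMap (hid.isLittleO.bound one_pos),
    eventually_forall_circleMap hderiv, eventually_gt_atTop 0] with r hsub hderiv hr θ
  have hdiv (t : ℝ) : ‖φ (circleMap 0 r t) / r‖ ≤ 2 := by
    have hle := (norm_sub_norm_le _ _).trans (hsub t)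
    rw [id, norm_circleMap_zero, abs_of_pos hr] at hle
    rw [norm_div, Complex.norm_real, Real.norm_of_nonneg hr.le, div_le_iff₀ hr]
    linarith
  exact norm_prod_le_iff.2 ⟨(pi_norm_le_iff_of_nonneg zero_le_two).2 fun μ => hdiv (θ μ),
    (pi_norm_le_iff_of_nonneg zero_le_two).2 fun μ => hderiv (θ μ)⟩

theorem tendsto_curveConfiguration {φ : ℂ → ℂ}
    (hφ : ∀ᶠ z in cobounded ℂ, DifferentiableAt ℂ φ z) (hid : φ ~[cobounded ℂ] id) {n : ℕ}
    (θ : Fin n → ℝ) :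
    Tendsto (curveConfiguration φ · θ) atTop (𝓝 (fun μ => circleMap 0 1 (θ μ), 1)) :=
  (tendsto_pi_nhds.2 fun μ => tendsto_div_circleMap hid (θ μ)).prodMk_nhds
    (tendsto_pi_nhds.2 fun μ => (tendsto_deriv_of_isEquivalent_id hφ hid).comp
      (tendsto_circleMap_cobounded (θ μ)))

theorem tendsto_Zn {φ : ℂ → ℂ} (hφ : ∀ᶠ z in cobounded ℂ, DifferentiableAt ℂ φ z)
    (hid : φ ~[cobounded ℂ] id) (n : ℕ) : Tendsto (Zn φ n) atTop (𝓝 ((2 * π) ^ n)) := by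
  have hint := tendsto_integral_comp_of_continuous
    (μ := Measure.pi fun _ : Fin n => angleMeasure) continuous_coulombDensity
    ((eventually_measurable_curveConfiguration hφ n).mono fun _ hr => hr.aestronglyMeasurable)
    (eventually_norm_curveConfiguration_le hφ hid n) (tendsto_curveConfiguration hφ hid)
  have h := hint.const_mul (n.factorial : ℝ)⁻¹
  rw [integral_coulombDensity_circleMap,
    inv_mul_cancel_left₀ (Nat.cast_ne_zero.2 n.factorial_ne_zero)] at h
  exact h.congr fun r => (Zn_eq_integral_coulombDensity φ n r).symm

theorem stmt12_general {φ : ℂ → ℂ} (hφ : ∀ᶠ z in cobounded ℂ, DifferentiableAt ℂ φ z)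
    (hid : φ ~[cobounded ℂ] id) (n : ℕ) : Tendsto (En φ n) atTop (𝓝 0) := by
  have hpi : (2 * π) ^ n ≠ 0 := by positivity
  have h := ((tendsto_Zn hφ hid n).div_const ((2 * π) ^ n)).log (div_ne_zero hpi hpi)
  rwa [div_self hpi, Real.log_one] at h

end

/-- For a univalent `φ` on the exterior disk with hydrodynamic
normalization, `E_n(r) → 0` as `r → ∞`. -/
theorem stmt12 (φ : ℂ → ℂ) (φ₀ : ℂ) (c : ℕ → ℂ)
    (hφ : DifferentiableOn ℂ φ {z : ℂ | 1 < ‖z‖})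
    (hinj : Set.InjOn φ {z : ℂ | 1 < ‖z‖})
    (hLaurent : ∀ z : ℂ, 1 < ‖z‖ →
      Summable (fun k : ℕ => ‖c k * z ^ (-(k : ℤ) - 1)‖) ∧
      φ z = z + φ₀ + ∑' k : ℕ, c k * z ^ (-(k : ℤ) - 1))
    (n : ℕ) (hn : 1 ≤ n) :
    Tendsto (En φ n) atTop (nhds 0) := by
  have exterior : ∀ᶠ z in Bornology.cobounded ℂ, 1 < ‖z‖ :=
    tendsto_norm_cobounded_atTop.eventually_gt_atTop 1
  exact stmt12_general
    (exterior.mono fun z hz =>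
      hφ.differentiableAt ((isOpen_lt continuous_const continuous_norm).mem_nhds hz))
    (isEquivalent_id_of_laurent two_ne_zero (hLaurent 2 (by norm_num)).1
      (exterior.mono fun z hz => (hLaurent z hz).2)) n
end

section
/- Let φ be holomorphic and injective on the exterior disk Δ = {z ∈ ℂ : |z| > 1}, with Laurent expansion φ(z) = z + φ₀ + ∑_{k≥1} φ_{-k} z^{-k} at infinity. Then for every r > 1, every n ≥ 0 and every monic complex polynomial p of degree n: (1/(2π)) ∫_{−π}^{π} |p( φ(r e^{iθ})/r )|² |φ'(r e^{iθ})| dθ ≥ 1. -/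
open MeasureTheory

/-!
Inversion turns the exterior disk into the unit disk: `A ζ = ζ * φ (1 / ζ)` is holomorphic there
with `A 0 = 1`, and `φ' z = A ζ - ζ * A' ζ` at `ζ = 1 / z`. For `p` of degree `n`, the function
`P ζ = (r * ζ) ^ n * p (A ζ / (r * ζ))` extends holomorphically to the disk, and its value at `0` is
the leading coefficient of `p`. On `‖z‖ = r` the factor `r * ζ` is unimodular, so the integrand is
the norm of `P ^ 2 * (A - ζ * A')` on the circle `‖ζ‖ = 1 / r`, and the mean value property at the
centre gives the bound.
-/

section CircleAverage

open Metric Real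

variable {E : Type*} [NormedAddCommGroup E]

theorem circleAverage_eq_integral_Icc_neg_pi_pi [NormedSpace ℝ E] (f : ℂ → E) (c : ℂ) (R : ℝ) :
    circleAverage f c R = (2 * π)⁻¹ • ∫ θ in Set.Icc (-π) π, f (circleMap c R θ) := by
  have hper : Function.Periodic (fun θ ↦ f (circleMap c R θ)) (2 * π) :=
    (periodic_circleMap c R).comp f
  have hshift := hper.intervalIntegral_add_eq 0 (-π)
  rw [zero_add, show -π + 2 * π = π by ring] at hshift
  rw [circleAverage_def, hshift, integral_Icc_eq_integral_Ioc,
    intervalIntegral.integral_of_le (by linarith [pi_pos])]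

theorem circleAverage_zero_congr_inv [NormedSpace ℝ E] (f : ℂ → E) (R : ℝ) :
    circleAverage (fun z ↦ f z⁻¹) 0 R = circleAverage f 0 R⁻¹ := by
  rw [circleAverage_eq_circleAverage_zero_one (R := R),
    circleAverage_eq_circleAverage_zero_one (R := R⁻¹),
    ← circleAverage_zero_one_congr_inv (f := fun z ↦ f ((R⁻¹ : ℝ) * z + 0))]
  simp only [add_zero, mul_inv, Complex.ofReal_inv]

theorem norm_circleAverage_le_circleAverage_norm [NormedSpace ℝ E] (f : ℂ → E) (c : ℂ) (R : ℝ) :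
    ‖circleAverage f c R‖ ≤ circleAverage (fun z ↦ ‖f z‖) c R := by
  rw [circleAverage_def, circleAverage_def, norm_smul, norm_of_nonneg (by positivity), smul_eq_mul]
  gcongr
  exact intervalIntegral.norm_integral_le_integral_norm two_pi_pos.le

theorem norm_le_circleAverage_norm [NormedSpace ℂ E] [CompleteSpace E] {f : ℂ → E} {c : ℂ} {R : ℝ}
    (hf : DiffContOnCl ℂ f (ball c |R|)) : ‖f c‖ ≤ circleAverage (fun z ↦ ‖f z‖) c R := by
  simpa only [hf.circleAverage] using norm_circleAverage_le_circleAverage_norm f c R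

end CircleAverage

section HolomorphicFunctions

open Metric

theorem differentiableOn_tsum_mul_pow_ball {a : ℕ → ℂ} {R : ℝ}
    (ha : ∀ ρ, 0 < ρ → ρ < R → Summable fun k ↦ ‖a k‖ * ρ ^ k) :
    DifferentiableOn ℂ (fun z ↦ ∑' k, a k * z ^ k) (ball 0 R) := by
  intro z hz
  obtain ⟨ρ, hzρ, hρR⟩ := exists_between (mem_ball_zero_iff.1 hz)
  have hρ : 0 < ρ := (norm_nonneg z).trans_lt hzρ
  have hdiff : DifferentiableOn ℂ (fun z ↦ ∑' k, a k * z ^ k) (ball 0 ρ) := by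
    refine Complex.differentiableOn_tsum_of_summable_norm (ha ρ hρ hρR) (fun k ↦ by fun_prop)
      isOpen_ball fun k w hw ↦ ?_
    rw [norm_mul, norm_pow]
    gcongr
    exact (mem_ball_zero_iff.1 hw).le
  exact (hdiff.differentiableAt
    (isOpen_ball.mem_nhds (mem_ball_zero_iff.2 hzρ))).differentiableWithinAt

theorem differentiableOn_eval_scaleRoots {𝕜 : Type*} [NontriviallyNormedField 𝕜]
    (p : Polynomial 𝕜) {f g : 𝕜 → 𝕜} {s : Set 𝕜} (hf : DifferentiableOn 𝕜 f s)
    (hg : DifferentiableOn 𝕜 g s) :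
    DifferentiableOn 𝕜 (fun z ↦ (p.scaleRoots (f z)).eval (g z)) s := by
  simp only [Polynomial.eval_eq_sum_range, Polynomial.natDegree_scaleRoots,
    Polynomial.coeff_scaleRoots]
  fun_prop

theorem norm_eval_scaleRoots_of_norm_eq_one {𝕜 : Type*} [NormedField 𝕜] (p : Polynomial 𝕜)
    {u : 𝕜} (hu : ‖u‖ = 1) (a : 𝕜) : ‖(p.scaleRoots u).eval a‖ = ‖p.eval (a / u)‖ := by
  have hu₀ : u ≠ 0 := norm_ne_zero_iff.1 (hu ▸ one_ne_zero)
  rw [← mul_div_cancel₀ a hu₀, Polynomial.scaleRoots_eval_mul, norm_mul, norm_pow, hu, one_pow,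
    one_mul, mul_div_cancel₀ a hu₀]

theorem hasDerivAt_mul_comp_inv {𝕜 : Type*} [NontriviallyNormedField 𝕜] {A : 𝕜 → 𝕜} {z : 𝕜}
    (hz : z ≠ 0) (hA : DifferentiableAt 𝕜 A z⁻¹) :
    HasDerivAt (fun w ↦ w * A w⁻¹) (A z⁻¹ - z⁻¹ * deriv A z⁻¹) z := by
  refine ((hasDerivAt_id' z).mul (hA.hasDerivAt.comp z (hasDerivAt_inv hz))).congr_deriv ?_
  simp only [Function.comp_apply]
  field_simp
  ring

theorem le_circleAverage_norm_eval_pow_mul_norm_deriv {A : ℂ → ℂ} {R r : ℝ} (hr : 0 < r)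
    (hrR : r⁻¹ < R) (hA : DifferentiableOn ℂ A (ball 0 R)) (p : Polynomial ℂ) (m : ℕ) :
    ‖p.leadingCoeff * A 0 ^ p.natDegree‖ ^ m * ‖A 0‖ ≤
      Real.circleAverage (fun z ↦ ‖p.eval (z * A z⁻¹ / r)‖ ^ m *
        ‖deriv (fun w ↦ w * A w⁻¹) z‖) 0 r := by
  set H : ℂ → ℂ := fun ζ ↦ (p.scaleRoots (r * ζ)).eval (A ζ) ^ m * (A ζ - ζ * deriv A ζ) with hH
  have hHdiff : DifferentiableOn ℂ H (ball 0 R) := by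
    have hP := differentiableOn_eval_scaleRoots p
      (by fun_prop : DifferentiableOn ℂ (fun ζ : ℂ ↦ r * ζ) (ball 0 R)) hA
    have hA' := hA.deriv isOpen_ball
    fun_prop
  have hHcl : DiffContOnCl ℂ H (ball 0 |r⁻¹|) := by
    rw [abs_of_pos (inv_pos.2 hr)]
    exact hHdiff.diffContOnCl_ball (closedBall_subset_ball hrR)
  have hpullback : Set.EqOn (fun z ↦ ‖H z⁻¹‖)
      (fun z ↦ ‖p.eval (z * A z⁻¹ / r)‖ ^ m * ‖deriv (fun w ↦ w * A w⁻¹) z‖) (sphere 0 |r|) := by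
    intro z hz
    have hzr : ‖z‖ = r := by simpa [abs_of_pos hr] using hz
    have hz₀ : z ≠ 0 := norm_pos_iff.1 (hzr ▸ hr)
    have hunit : ‖(r : ℂ) * z⁻¹‖ = 1 := by simp [hzr, abs_of_pos hr, hr.ne']
    have hquot : A z⁻¹ / (r * z⁻¹) = z * A z⁻¹ / r := by field_simp
    have hzR : z⁻¹ ∈ ball (0 : ℂ) R := by simpa [hzr] using hrR
    have hderiv := hasDerivAt_mul_comp_inv hz₀ (hA.differentiableAt (isOpen_ball.mem_nhds hzR))
    simp only [hH, norm_mul, norm_pow, norm_eval_scaleRoots_of_norm_eq_one p hunit, hquot,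
      hderiv.deriv]
  calc ‖p.leadingCoeff * A 0 ^ p.natDegree‖ ^ m * ‖A 0‖ = ‖H 0‖ := by simp [hH]
    _ ≤ Real.circleAverage (fun ζ ↦ ‖H ζ‖) 0 r⁻¹ := norm_le_circleAverage_norm hHcl
    _ = Real.circleAverage (fun z ↦ ‖H z⁻¹‖) 0 r := (circleAverage_zero_congr_inv _ r).symm
    _ = _ := Real.circleAverage_congr_sphere hpullback

end HolomorphicFunctions

section LaurentExpansion

/-- For `φ z = z + φ₀ + ∑ k, c k * z ^ (-k - 1)`, the holomorphic extension of `ζ ↦ ζ * φ (1 / ζ)`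
from the punctured unit disk to the unit disk. It is written as a power series in order to have the
correct value at `ζ = 0`. -/
noncomputable def laurentCofactor (φ₀ : ℂ) (c : ℕ → ℂ) (ζ : ℂ) : ℂ :=
  1 + φ₀ * ζ + ζ ^ 2 * ∑' k, c k * ζ ^ k

theorem laurentCofactor_zero (φ₀ : ℂ) (c : ℕ → ℂ) : laurentCofactor φ₀ c 0 = 1 := by
  simp [laurentCofactor]

theorem zpow_neg_natCast_sub_one {G : Type*} [DivisionMonoid G] (z : G) (k : ℕ) :
    z ^ (-(k : ℤ) - 1) = z⁻¹ * z⁻¹ ^ k := by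
  rw [← pow_succ', inv_pow, ← zpow_natCast, ← zpow_neg]
  congr 1
  push_cast
  ring

theorem mul_laurentCofactor_inv (φ₀ : ℂ) (c : ℕ → ℂ) {z : ℂ} (hz : z ≠ 0) :
    z * laurentCofactor φ₀ c z⁻¹ = z + φ₀ + ∑' k : ℕ, c k * z ^ (-(k : ℤ) - 1) := by
  simp only [zpow_neg_natCast_sub_one, mul_left_comm (c _), tsum_mul_left, laurentCofactor]
  field_simp

theorem differentiableOn_laurentCofactor (φ₀ : ℂ) {c : ℕ → ℂ}
    (hc : ∀ z : ℂ, 1 < ‖z‖ → Summable fun k : ℕ ↦ ‖c k * z ^ (-(k : ℤ) - 1)‖) :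
    DifferentiableOn ℂ (laurentCofactor φ₀ c) (Metric.ball 0 1) := by
  have hseries : DifferentiableOn ℂ (fun ζ ↦ ∑' k, c k * ζ ^ k) (Metric.ball 0 1) := by
    refine differentiableOn_tsum_mul_pow_ball fun ρ hρ hρ1 ↦ ?_
    have hsum := hc (ρ : ℂ)⁻¹ (by simpa [abs_of_pos hρ] using (one_lt_inv₀ hρ).2 hρ1)
    simpa [zpow_neg_natCast_sub_one, abs_of_pos hρ, mul_left_comm _ ρ, summable_mul_left_iff hρ.ne']
      using hsum
  unfold laurentCofactor
  fun_prop

end LaurentExpansion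

theorem stmt15_general {φ : ℂ → ℂ} {φ₀ : ℂ} {c : ℕ → ℂ}
    (hLaurent : ∀ z : ℂ, 1 < ‖z‖ →
      Summable (fun k : ℕ ↦ ‖c k * z ^ (-(k : ℤ) - 1)‖) ∧
      φ z = z + φ₀ + ∑' k : ℕ, c k * z ^ (-(k : ℤ) - 1))
    {r : ℝ} (hr : 1 < r) (p : Polynomial ℂ) (m : ℕ) :
    ‖p.leadingCoeff‖ ^ m ≤
      Real.circleAverage (fun z ↦ ‖p.eval (φ z / r)‖ ^ m * ‖deriv φ z‖) 0 r := by
  set A := laurentCofactor φ₀ c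
  have hr₀ : 0 < r := one_pos.trans hr
  have hφ : Set.EqOn φ (fun z ↦ z * A z⁻¹) {z | 1 < ‖z‖} := fun z hz ↦ by
    have hz₀ : z ≠ 0 := norm_pos_iff.1 (one_pos.trans hz)
    rw [(hLaurent z hz).2, ← mul_laurentCofactor_inv φ₀ c hz₀]
  have hopen : IsOpen {z : ℂ | 1 < ‖z‖} := isOpen_lt continuous_const continuous_norm
  have hA : DifferentiableOn ℂ A (Metric.ball 0 1) :=
    differentiableOn_laurentCofactor φ₀ fun z hz ↦ (hLaurent z hz).1
  have hbound :=
    le_circleAverage_norm_eval_pow_mul_norm_deriv hr₀ (inv_lt_one_of_one_lt₀ hr) hA p m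
  rw [show A 0 = 1 from laurentCofactor_zero φ₀ c, one_pow, mul_one, norm_one, mul_one] at hbound
  refine hbound.trans_eq (Real.circleAverage_congr_sphere fun z hz ↦ ?_)
  have hz1 : 1 < ‖z‖ := by simpa [mem_sphere_zero_iff_norm.1 hz, abs_of_pos hr₀] using hr
  simp only [hφ hz1, (hφ.eventuallyEq_of_mem (hopen.mem_nhds hz1)).deriv_eq]

/-- For a univalent `φ` on the exterior disk with hydrodynamic
normalization, every `r > 1`, every `n ≥ 0` and every monic polynomial `p` of degree
`n`, the squared `L²` norm of `p` on the curve `γ_r` (parametrized by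
`θ ↦ φ(re^{iθ})/r` with arclength weight `|φ'(re^{iθ})|`, divided by `2π`) is `≥ 1`. -/
theorem stmt15 (φ : ℂ → ℂ) (φ₀ : ℂ) (c : ℕ → ℂ)
    (hφ : DifferentiableOn ℂ φ {z : ℂ | 1 < ‖z‖})
    (hinj : Set.InjOn φ {z : ℂ | 1 < ‖z‖})
    (hLaurent : ∀ z : ℂ, 1 < ‖z‖ →
      Summable (fun k : ℕ => ‖c k * z ^ (-(k : ℤ) - 1)‖) ∧
      φ z = z + φ₀ + ∑' k : ℕ, c k * z ^ (-(k : ℤ) - 1)) :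
    ∀ r : ℝ, 1 < r → ∀ (n : ℕ) (p : Polynomial ℂ), p.Monic → p.natDegree = n →
      1 ≤ (1 / (2 * Real.pi)) *
        ∫ θ in Set.Icc (-Real.pi) Real.pi,
          ‖p.eval (φ ((r : ℂ) * Complex.exp (Complex.I * (θ : ℂ))) / (r : ℂ))‖ ^ 2
            * ‖deriv φ ((r : ℂ) * Complex.exp (Complex.I * (θ : ℂ)))‖ := by
  intro r hr n p hp _
  have h := stmt15_general hLaurent hr p 2
  simpa [circleAverage_eq_integral_Icc_neg_pi_pi, hp.leadingCoeff, circleMap, mul_comm Complex.I]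
    using h
end
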